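/- arXiv:1509.01089 — 3 statements merged into one kernel-verified Lean document; each statement's English description precedes it below -/
import Mathlib

section
/- Let v : ℝ^p → ℝ^p be continuously differentiable and homogeneous of degree 2 (v(λω) = λ²v(ω) for all λ, ω), and let ω₀ ≠ 0 be a steady state, v(ω₀) = 0. For a point ω, let u(ω) (resp. s(ω)) denote the number of roots, counted with multiplicity, of the characteristic polynomial over ℂ of the Jacobian matrix Dv(ω) that have strictly positive (resp. strictly negative) real part. Then every μω₀ with μ ∈ ℝ is also a steady state, and: for μ > 0 one has u(μω₀) = u(ω₀) and s(μω₀) = s(ω₀), while for μ < 0 one has u(μω₀) = s(ω₀) and s(μω₀) = u(ω₀). -/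
/-!
Differentiating `v (c • ω) = c ^ 2 • v ω` in `ω` gives `c • Dv (c • ω) = c ^ 2 • Dv ω`, so
`Dv (c • ω) = c • Dv ω` for `c ≠ 0`. The eigenvalues at `c • ω` are therefore those at `ω`
multiplied by the real number `c`, which keeps the signs of all real parts when `c > 0` and
exchanges them when `c < 0`.
-/

/-- The Jacobian matrix of a map `v : ℝᵖ → ℝᵖ` at a point `ω`. -/
noncomputable def jacobianMatrix {p : ℕ} (v : (Fin p → ℝ) → (Fin p → ℝ))
    (ω : Fin p → ℝ) : Matrix (Fin p) (Fin p) ℝ :=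
  Matrix.of fun i j => fderiv ℝ v ω (Pi.single j 1) i

open Classical in
/-- `u(ω)`: the number of roots (with multiplicity) of the characteristic polynomial
of the Jacobian `Dv(ω)` over `ℂ` with strictly positive real part. -/
noncomputable def unstableCount {p : ℕ} (v : (Fin p → ℝ) → (Fin p → ℝ))
    (ω : Fin p → ℝ) : ℕ :=
  Multiset.card (((jacobianMatrix v ω).charpoly.aroots ℂ).filter fun z => 0 < z.re)

open Classical in
/-- `s(ω)`: the number of roots (with multiplicity) of the characteristic polynomial
of the Jacobian `Dv(ω)` over `ℂ` with strictly negative real part. -/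
noncomputable def stableCount {p : ℕ} (v : (Fin p → ℝ) → (Fin p → ℝ))
    (ω : Fin p → ℝ) : ℕ :=
  Multiset.card (((jacobianMatrix v ω).charpoly.aroots ℂ).filter fun z => z.re < 0)

section Charpoly

variable {n R : Type*} [Fintype n] [DecidableEq n] [CommRing R]

theorem charpoly_smul (A : Matrix n n R) (c : R) :
    (c • A).charpoly = A.charpoly.scaleRoots c := by
  nontriviality R
  ext k
  rw [Polynomial.coeff_scaleRoots, A.charpoly_natDegree_eq_dim]
  rcases le_or_gt k (Fintype.card n) with hk | hk
  · -- The coefficient of `X ^ k` is a signed sum of minors of size `card n - k`.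
    obtain ⟨m, hm, rfl⟩ : ∃ m ≤ Fintype.card n, k = Fintype.card n - m :=
      ⟨_, Nat.sub_le _ k, (Nat.sub_sub_self hk).symm⟩
    have minor_smul : ∀ s ∈ Finset.univ.powersetCard m,
        ((c • A).submatrix (Subtype.val : s → n) Subtype.val).det =
          c ^ m * (A.submatrix (Subtype.val : s → n) Subtype.val).det := fun s hs => by
      rw [Matrix.submatrix_smul, Pi.smul_apply, Pi.smul_apply, Matrix.det_smul, Fintype.card_coe,
        (Finset.mem_powersetCard.mp hs).2]
    rw [Matrix.charpoly_coeff_eq_sum_minors _ m hm, Matrix.charpoly_coeff_eq_sum_minors _ m hm,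
      Finset.sum_congr rfl minor_smul, ← Finset.mul_sum, Nat.sub_sub_self hm]
    ring
  · have coeff_eq_zero (B : Matrix n n R) : B.charpoly.coeff k = 0 :=
      Polynomial.coeff_eq_zero_of_natDegree_lt (B.charpoly_natDegree_eq_dim.trans_lt hk)
    rw [coeff_eq_zero, coeff_eq_zero, zero_mul]

theorem aroots_charpoly_smul {S : Type*} [CommRing S] [IsDomain S] [Algebra R S]
    (A : Matrix n n R) {c : R} (hc : IsUnit (algebraMap R S c)) :
    (c • A).charpoly.aroots S = (A.charpoly.aroots S).map (c • ·) := by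
  have leadingCoeff_ne_zero : algebraMap R S A.charpoly.leadingCoeff ≠ 0 := by
    simp [A.charpoly_monic.leadingCoeff]
  rw [charpoly_smul, Polynomial.aroots, Polynomial.map_scaleRoots _ _ _ leadingCoeff_ne_zero,
    Polynomial.roots_scaleRoots _ hc]
  simp only [Algebra.smul_def]

end Charpoly

theorem card_filter_map_of_iff {α β : Type*} (s : Multiset α) {f : α → β} {P : α → Prop}
    {Q : β → Prop} [DecidablePred P] [DecidablePred Q] (h : ∀ x, Q (f x) ↔ P x) :
    ((s.map f).filter Q).card = (s.filter P).card := by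
  simp only [Multiset.filter_map, Multiset.card_map, Function.comp_def, h]

theorem hasFDerivAt_smul_of_map_smul {𝕜 E F : Type*} [NontriviallyNormedField 𝕜]
    [NormedAddCommGroup E] [NormedSpace 𝕜 E] [NormedAddCommGroup F] [NormedSpace 𝕜 F]
    {f : E → F} {f' : E →L[𝕜] F} {a c : 𝕜} {x : E} (hc : c ≠ 0)
    (hf : ∀ y, f (c • y) = a • f y) (hx : HasFDerivAt f f' x) :
    HasFDerivAt f ((a / c) • f') (c • x) := by
  have f_eq : f = fun y => a • f (c⁻¹ • y) := by
    ext y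
    rw [← hf, smul_inv_smul₀ hc]
  have hx' : HasFDerivAt f f' (c⁻¹ • c • x) := by rwa [inv_smul_smul₀ hc]
  rw [f_eq]
  refine ((hx'.comp (c • x) ((hasFDerivAt_id (c • x)).const_smul c⁻¹)).const_smul a).congr_fderiv ?_
  ext y
  simp [div_eq_mul_inv, mul_smul]

section Jacobian

variable {p : ℕ} {v : (Fin p → ℝ) → (Fin p → ℝ)} {ω : Fin p → ℝ} {a c : ℝ}

theorem jacobianMatrix_smul (hc : c ≠ 0) (hv : ∀ x, v (c • x) = a • v x)
    (hω : DifferentiableAt ℝ v ω) :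
    jacobianMatrix v (c • ω) = (a / c) • jacobianMatrix v ω := by
  ext i j
  simp [jacobianMatrix, (hasFDerivAt_smul_of_map_smul hc hv hω.hasFDerivAt).fderiv]

theorem aroots_charpoly_jacobianMatrix_smul (hac : a / c ≠ 0) (hv : ∀ x, v (c • x) = a • v x)
    (hω : DifferentiableAt ℝ v ω) :
    (jacobianMatrix v (c • ω)).charpoly.aroots ℂ =
      ((jacobianMatrix v ω).charpoly.aroots ℂ).map ((a / c) • ·) := by
  have hc : c ≠ 0 := (div_ne_zero_iff.mp hac).2
  rw [jacobianMatrix_smul hc hv hω]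
  exact aroots_charpoly_smul _ (isUnit_iff_ne_zero.mpr (Complex.ofReal_ne_zero.mpr hac))

theorem unstableCount_smul_of_div_pos (hac : 0 < a / c) (hv : ∀ x, v (c • x) = a • v x)
    (hω : DifferentiableAt ℝ v ω) : unstableCount v (c • ω) = unstableCount v ω := by
  rw [unstableCount, aroots_charpoly_jacobianMatrix_smul hac.ne' hv hω]
  exact card_filter_map_of_iff _ fun z => by
    rw [Complex.smul_re, smul_pos_iff_of_pos_left hac]

theorem stableCount_smul_of_div_pos (hac : 0 < a / c) (hv : ∀ x, v (c • x) = a • v x)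
    (hω : DifferentiableAt ℝ v ω) : stableCount v (c • ω) = stableCount v ω := by
  rw [stableCount, aroots_charpoly_jacobianMatrix_smul hac.ne' hv hω]
  exact card_filter_map_of_iff _ fun z => by
    rw [Complex.smul_re, smul_neg_iff_of_pos_left hac]

theorem unstableCount_smul_of_div_neg (hac : a / c < 0) (hv : ∀ x, v (c • x) = a • v x)
    (hω : DifferentiableAt ℝ v ω) : unstableCount v (c • ω) = stableCount v ω := by
  rw [unstableCount, aroots_charpoly_jacobianMatrix_smul hac.ne hv hω]
  exact card_filter_map_of_iff _ fun z => by
    rw [Complex.smul_re, smul_pos_iff_of_neg_left hac]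

theorem stableCount_smul_of_div_neg (hac : a / c < 0) (hv : ∀ x, v (c • x) = a • v x)
    (hω : DifferentiableAt ℝ v ω) : stableCount v (c • ω) = unstableCount v ω := by
  rw [stableCount, aroots_charpoly_jacobianMatrix_smul hac.ne hv hω]
  exact card_filter_map_of_iff _ fun z => by
    rw [Complex.smul_re, smul_neg_iff_of_neg_left hac]

end Jacobian

/-- `μ ^ n / μ` stands for `μ ^ (n - 1)`, which would truncate at `n = 0`; it vanishes at `μ = 0`,
so both sign conditions exclude that point. -/
theorem stability_counts_along_line_of_steady_motions_general {p n : ℕ}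
    {v : (Fin p → ℝ) → (Fin p → ℝ)} (hhom : ∀ (c : ℝ) (ω : Fin p → ℝ), v (c • ω) = c ^ n • v ω)
    {ω₀ : Fin p → ℝ} (hdiff : DifferentiableAt ℝ v ω₀) :
    (v ω₀ = 0 → ∀ μ : ℝ, v (μ • ω₀) = 0) ∧
    (∀ μ : ℝ, 0 < μ ^ n / μ →
      unstableCount v (μ • ω₀) = unstableCount v ω₀ ∧
      stableCount v (μ • ω₀) = stableCount v ω₀) ∧
    (∀ μ : ℝ, μ ^ n / μ < 0 →
      unstableCount v (μ • ω₀) = stableCount v ω₀ ∧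
      stableCount v (μ • ω₀) = unstableCount v ω₀) :=
  ⟨fun hss μ => by rw [hhom, hss, smul_zero],
    fun μ hμ => ⟨unstableCount_smul_of_div_pos hμ (hhom μ) hdiff,
      stableCount_smul_of_div_pos hμ (hhom μ) hdiff⟩,
    fun μ hμ => ⟨unstableCount_smul_of_div_neg hμ (hhom μ) hdiff,
      stableCount_smul_of_div_neg hμ (hhom μ) hdiff⟩⟩

/-- For a `C¹` map `v : ℝᵖ → ℝᵖ` homogeneous of degree 2 with
steady state `ω₀ ≠ 0`, every `μ ω₀` is a steady state, and the counts `u`, `s` of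
eigenvalues of the Jacobian with positive/negative real part satisfy
`u(μω₀) = u(ω₀)`, `s(μω₀) = s(ω₀)` for `μ > 0` and
`u(μω₀) = s(ω₀)`, `s(μω₀) = u(ω₀)` for `μ < 0`. -/
theorem stability_counts_along_line_of_steady_motions
    (p : ℕ) (v : (Fin p → ℝ) → (Fin p → ℝ))
    (hcd : ContDiff ℝ 1 v)
    (hhom : ∀ (c : ℝ) (ω : Fin p → ℝ), v (c • ω) = c ^ 2 • v ω)
    (ω₀ : Fin p → ℝ) (hω₀ : ω₀ ≠ 0) (hss : v ω₀ = 0) :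
    (∀ μ : ℝ, v (μ • ω₀) = 0) ∧
    (∀ μ : ℝ, 0 < μ →
      unstableCount v (μ • ω₀) = unstableCount v ω₀ ∧
      stableCount v (μ • ω₀) = stableCount v ω₀) ∧
    (∀ μ : ℝ, μ < 0 →
      unstableCount v (μ • ω₀) = stableCount v ω₀ ∧
      stableCount v (μ • ω₀) = unstableCount v ω₀) := by
  simpa only [sq, mul_self_div_self, hss, forall_const] using
    stability_counts_along_line_of_steady_motions_general hhom
      (hcd.differentiable one_ne_zero ω₀)
end

section
/- Let v : ℝ^p → ℝ^p be continuously differentiable and homogeneous of degree 2 (v(λω) = λ²v(ω)), and suppose there is a symmetric positive definite bilinear form B on ℝ^p with B(v(ω), ω) = 0 for all ω (a positive definite quadratic first integral). Assume the zero set of v away from the origin is the union of finitely many punctured lines: there are distinct one-dimensional subspaces ℓ₁, …, ℓ_N with {ω ≠ 0 : v(ω) = 0} = ⋃_k (ℓ_k \ {0}), and that each is nondegenerate: at every nonzero zero ω of v, 0 is a root of algebraic multiplicity exactly 1 of the characteristic polynomial of the Jacobian Dv(ω). For ω_k ∈ ℓ_k \ {0} let j(ω) = (−1)^{s(ω)},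 where s(ω) is the number of eigenvalues of Dv(ω) (with multiplicity) having negative real part, and let i_k = j(ω_k) + j(−ω_k). Then the sum of the indices equals Σ_{k=1}^N i_k = 1 + (−1)^{p+1}. -/
/-- `j(ω) = (−1)^{s(ω)}`, the sign attached to a steady state `ω`. -/
noncomputable def signJ {p : ℕ} (v : (Fin p → ℝ) → (Fin p → ℝ))
    (ω : Fin p → ℝ) : ℤ :=
  (-1 : ℤ) ^ stableCount v ω

/-!
After an orthonormal change of coordinates `B` is the inner product, and `u x = ‖x‖⁻¹ • v x` is an
even field of degree one that is tangent to the spheres. Since `‖x + t • u x‖² = ‖x‖² + t² ‖u x‖²`,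
the change of variables `y = x ± t • u x`, a bijection for small `t`, turns the Gaussian integral
into `∫ exp (-(‖x‖² + t² ‖u x‖²)) * det (1 ± t • Du x)`. The average over the two signs is
an analytic function of `s = t²`, so it equals the Gaussian integral for all `s ≥ 0`.

In odd dimension `p`, let `t → ∞`: the integral concentrates on thin double cones around the zero
lines of `u`. Stretching such a cone transversally by `t` turns its contribution into a Gaussian
integral, up to the sign of the `(p - 1)`-st elementary symmetric function of the eigenvalues of
`Du` on the line. By nondegeneracy this function is the product of the nonzero eigenvalues, and its
sign is `j (ω_k)`, because non-real eigenvalues come in conjugate pairs. Hence `∑ j (ω_k) = 1`. The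
Jacobian of `v` is odd, so `j (-ω) = (-1) ^ (p + 1) * j ω`, which also settles even `p`.
-/

open Polynomial MeasureTheory Filter Topology RealInnerProductSpace

section EigenEsymm

variable {K V W : Type*} [Field K] [AddCommGroup V] [Module K V] [FiniteDimensional K V]
  [AddCommGroup W] [Module K W] [FiniteDimensional K W]

/-- The polynomial `det (1 + X A)`, whose coefficient of `X ^ k` is the `k`-th elementary symmetric
function of the eigenvalues of `A`. -/
noncomputable def detOneAddX (A : Module.End K V) : K[X] :=
  A.charpoly.reverse.comp (C (-1) * X)

/-- The `k`-th elementary symmetric function of the eigenvalues of `A`. -/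
noncomputable def eigenEsymm (k : ℕ) (A : Module.End K V) : K :=
  (detOneAddX A).coeff k

lemma eigenEsymm_eq_coeff_charpoly (A : Module.End K V) {k : ℕ}
    (hk : k ≤ Module.finrank K V) :
    eigenEsymm k A = (-1) ^ k * A.charpoly.coeff (Module.finrank K V - k) := by
  rw [eigenEsymm, detOneAddX, comp_C_mul_X_coeff, coeff_reverse, A.charpoly_natDegree,
    revAt_le hk, mul_comm]

lemma natDegree_detOneAddX_le (A : Module.End K V) :
    (detOneAddX A).natDegree ≤ Module.finrank K V := by
  refine natDegree_le_iff_coeff_eq_zero.2 fun k hk => ?_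
  rw [detOneAddX, comp_C_mul_X_coeff, coeff_eq_zero_of_natDegree_lt, zero_mul]
  exact (reverse_natDegree_le _).trans_lt (A.charpoly_natDegree.trans_lt hk)

lemma eigenEsymm_finrank (A : Module.End K V) :
    eigenEsymm (Module.finrank K V) A = LinearMap.det A := by
  rw [eigenEsymm_eq_coeff_charpoly A le_rfl, Nat.sub_self, LinearMap.det_eq_sign_charpoly_coeff]

lemma eval_detOneAddX (A : Module.End K V) (t : K) :
    (detOneAddX A).eval t = LinearMap.det (1 + t • A) := by
  have heval : (detOneAddX A).eval t = A.charpoly.reverse.eval (-t) := by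
    simp [detOneAddX, eval_comp]
  rcases eq_or_ne t 0 with rfl | ht
  · simp [heval, ← coeff_zero_eq_eval_zero, A.charpoly_monic.leadingCoeff]
  · have hunit : -t⁻¹ ≠ 0 := neg_ne_zero.2 (inv_ne_zero ht)
    have : Invertible (-t⁻¹) := invertibleOfNonzero hunit
    have hrev := eval₂_reverse_mul_pow (RingHom.id K) (-t⁻¹) A.charpoly
    rw [A.charpoly_natDegree, invOf_eq_inv, inv_neg, inv_inv, eval₂_id, eval₂_id,
      LinearMap.eval_charpoly] at hrev
    have hsplit : algebraMap K (Module.End K V) (-t⁻¹) - A = (-t⁻¹) • (1 + t • A) := by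
      rw [smul_add, smul_smul, neg_mul, inv_mul_cancel₀ ht, neg_one_smul,
        Algebra.algebraMap_eq_smul_one, sub_eq_add_neg]
    rw [hsplit, LinearMap.det_smul, mul_comm] at hrev
    rw [heval, mul_left_cancel₀ (pow_ne_zero _ hunit) hrev]

lemma eigenEsymm_conj (k : ℕ) (T : V ≃ₗ[K] W) (A : Module.End K V) :
    eigenEsymm k (T.conj A) = eigenEsymm k A := by
  rw [eigenEsymm, detOneAddX, T.charpoly_conj, eigenEsymm, detOneAddX]

lemma detOneAddX_smul [Infinite K] (c : K) (A : Module.End K V) :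
    detOneAddX (c • A) = (detOneAddX A).comp (C c * X) :=
  Polynomial.funext fun t => by
    rw [eval_comp, eval_mul, eval_C, eval_X, eval_detOneAddX, eval_detOneAddX, smul_smul, mul_comm]

lemma eigenEsymm_smul [Infinite K] (k : ℕ) (c : K) (A : Module.End K V) :
    eigenEsymm k (c • A) = c ^ k * eigenEsymm k A := by
  rw [eigenEsymm, detOneAddX_smul, comp_C_mul_X_coeff, mul_comm, eigenEsymm]

lemma detOneAddX_add_smulRight [Infinite K] {A : Module.End K V} {φ : Module.Dual K V} {e : V}
    (hφe : φ e = 1) (hφA : φ ∘ₗ A = 0) :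
    detOneAddX (φ.smulRight e + A) = (1 + X) * detOneAddX A := by
  refine Polynomial.funext fun t => ?_
  have hfactor : 1 + t • (φ.smulRight e + A) =
      LinearMap.transvection (t • φ) e * (1 + t • A) := by
    ext x
    have hx : φ (A x) = 0 := LinearMap.congr_fun hφA x
    simp [LinearMap.transvection.apply, hx]
    module
  rw [eval_mul, eval_add, eval_one, eval_X, eval_detOneAddX, eval_detOneAddX, hfactor, map_mul,
    LinearMap.transvection.det, LinearMap.smul_apply, hφe, smul_eq_mul, mul_one]

lemma det_smulRight_add [Infinite K] {A : Module.End K V} {φ : Module.Dual K V} {e : V}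
    (hφe : φ e = 1) (hφA : φ ∘ₗ A = 0) (hA : A e = 0) :
    LinearMap.det (φ.smulRight e + A) = eigenEsymm (Module.finrank K V - 1) A := by
  have he : e ≠ 0 := fun h => by simp [h] at hφe
  have : Nontrivial V := ⟨e, 0, he⟩
  have hdet : LinearMap.det A = 0 := by
    by_contra h
    exact he (((LinearMap.equivOfDetNeZero A h).map_eq_zero_iff).1 hA)
  -- Compare top coefficients in `det (1 + X (φ ⊗ e + A)) = (1 + X) det (1 + X A)`.
  obtain ⟨n, hn⟩ := Nat.exists_eq_succ_of_ne_zero (Module.finrank_pos (R := K) (M := V)).ne'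
  have htop : (detOneAddX A).coeff (n + 1) = 0 := by
    rw [← Nat.succ_eq_add_one, ← hn, ← hdet, ← eigenEsymm_finrank, eigenEsymm]
  rw [← eigenEsymm_finrank, eigenEsymm, detOneAddX_add_smulRight hφe hφA, add_mul, one_mul,
    coeff_add, hn, Nat.succ_eq_add_one, htop, zero_add, coeff_X_mul, Nat.add_sub_cancel,
    eigenEsymm]

lemma det_smulRight_add_smul {φ : Module.Dual K V} {e : V} (hφe : φ e = 1) {c : K} (hc : c ≠ 0) :
    LinearMap.det (φ.smulRight e + c • (1 - φ.smulRight e)) = c ^ (Module.finrank K V - 1) := by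
  have : Nontrivial V := ⟨e, 0, fun h => by simp [h] at hφe⟩
  have hfactor : φ.smulRight e + c • (1 - φ.smulRight e) =
      c • LinearMap.transvection ((c⁻¹ - 1) • φ) e := by
    ext x
    simp [LinearMap.transvection.apply, smul_smul, sub_mul, mul_sub, hc]
    module
  rw [hfactor, LinearMap.det_smul, LinearMap.transvection.det, LinearMap.smul_apply, hφe,
    smul_eq_mul, mul_one, add_sub_cancel, ← div_eq_mul_inv,
    div_eq_iff hc, pow_sub_one_mul Module.finrank_pos.ne']

end EigenEsymm

lemma continuous_eigenEsymm {𝕜 E : Type*} [NontriviallyNormedField 𝕜] [CompleteSpace 𝕜]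
    [NormedAddCommGroup E] [NormedSpace 𝕜 E] [FiniteDimensional 𝕜 E] (k : ℕ) :
    Continuous fun A : E →L[𝕜] E => eigenEsymm k (A : Module.End 𝕜 E) := by
  rcases le_or_gt k (Module.finrank 𝕜 E) with hk | hk
  · let b := Module.finBasis 𝕜 (E →L[𝕜] E)
    have hpoly (A : E →L[𝕜] E) := LinearMap.polyCharpoly_coeff_eval
      (ContinuousLinearMap.coeLM 𝕜 : (E →L[𝕜] E) →ₗ[𝕜] Module.End 𝕜 E) b A
    simp only [eigenEsymm_eq_coeff_charpoly _ hk]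
    refine continuous_const.mul ?_
    exact ((MvPolynomial.continuous_eval _).comp
      (continuous_pi fun i => (b.coord i).continuous_of_finiteDimensional)).congr
      fun A => hpoly A _
  · simp only [eigenEsymm,
      coeff_eq_zero_of_natDegree_lt ((natDegree_detOneAddX_le _).trans_lt hk)]
    exact continuous_const

lemma sum_range_two_mul_add_neg {R : Type*} [CommRing R] (c : ℕ → R) (t : R) (n : ℕ) :
    ∑ k ∈ Finset.range (2 * n), c k * t ^ k + ∑ k ∈ Finset.range (2 * n), c k * (-t) ^ k =
      2 * ∑ j ∈ Finset.range n, c (2 * j) * (t ^ 2) ^ j := by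
  induction n with
  | zero => simp
  | succ n ih =>
    rw [mul_add_one, Finset.sum_range_succ, Finset.sum_range_succ, Finset.sum_range_succ,
      Finset.sum_range_succ, Finset.sum_range_succ, mul_add, ← ih, (even_two_mul n).neg_pow,
      (odd_two_mul_add_one n).neg_pow, pow_mul]
    ring

/-- The even part of `det (1 + t A)` as a function of `s = t ^ 2`. -/
noncomputable def evenDet {K V : Type*} [Field K] [AddCommGroup V] [Module K V]
    [FiniteDimensional K V] (A : Module.End K V) (s : K) : K :=
  ∑ j ∈ Finset.range (Module.finrank K V / 2 + 1), eigenEsymm (2 * j) A * s ^ j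

lemma det_one_add_smul_add_det_one_sub_smul {K V : Type*} [Field K] [AddCommGroup V] [Module K V]
    [FiniteDimensional K V] (A : Module.End K V) (t : K) :
    LinearMap.det (1 + t • A) + LinearMap.det (1 + (-t) • A) = 2 * evenDet A (t ^ 2) := by
  have hdeg : (detOneAddX A).natDegree < 2 * (Module.finrank K V / 2 + 1) :=
    (natDegree_detOneAddX_le A).trans_lt (by omega)
  rw [← eval_detOneAddX, ← eval_detOneAddX, eval_eq_sum_range' hdeg, eval_eq_sum_range' hdeg,
    sum_range_two_mul_add_neg]
  rfl

section Sign

lemma prod_map_ite_neg {R : Type*} [CommMonoid R] [HasDistribNeg R] (p : R → Prop)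
    [DecidablePred p] (S : Multiset R) :
    (S.map fun z => if p z then -z else z).prod = (-1) ^ (S.filter p).card * S.prod := by
  induction S using Multiset.induction_on with
  | empty => simp
  | cons z S ih =>
    by_cases hz : p z <;> simp [hz, ih, pow_succ, mul_left_comm]

open ComplexOrder in
lemma prod_pos_of_map_conj_eq {S : Multiset ℂ} (hconj : S.map (starRingEnd ℂ) = S) (h0 : 0 ∉ S)
    (hreal : ∀ z ∈ S, z.im = 0 → 0 < z) : 0 < S.prod := by
  have hlower : S.filter (fun z => z.im < 0) =
      (S.filter fun z => 0 < z.im).map (starRingEnd ℂ) := by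
    conv_lhs => rw [← hconj, Multiset.filter_map]
    simp
  have hnonreal : S.filter (fun z => ¬z.im = 0) =
      S.filter (fun z => 0 < z.im) + S.filter fun z => z.im < 0 := by
    rw [Multiset.filter_add_filter, (Multiset.filter_eq_nil (p := fun z : ℂ => _ ∧ _)).2, add_zero]
    · exact Multiset.filter_congr fun z _ => by rw [← ne_eq, lt_or_lt_iff_ne.symm, or_comm]
    · exact fun z _ h => lt_asymm h.1 h.2
  rw [← Multiset.filter_add_not (fun z : ℂ => z.im = 0) S, hnonreal, hlower, Multiset.prod_add,
    Multiset.prod_add, Multiset.prod_hom, Complex.mul_conj]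
  refine mul_pos (Multiset.prod_pos fun z hz => ?_) ?_
  · exact hreal z (Multiset.mem_filter.1 hz).1 (Multiset.mem_filter.1 hz).2
  · refine Complex.zero_lt_real.2 (Complex.normSq_pos.2 fun h => h0 ?_)
    exact (Multiset.mem_filter.1 (Multiset.prod_eq_zero_iff.1 h)).1

open ComplexOrder in
lemma neg_one_pow_card_re_neg_mul_prod_pos {S : Multiset ℂ} (hconj : S.map (starRingEnd ℂ) = S)
    (h0 : 0 ∉ S) : 0 < (-1) ^ (S.filter fun z => z.re < 0).card * S.prod := by
  -- Negating the elements in the left half plane keeps the conjugation symmetry and makes all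
  -- real elements positive.
  rw [← prod_map_ite_neg]
  refine prod_pos_of_map_conj_eq ?_ ?_ ?_
  · conv_rhs => rw [← hconj]
    simp [Multiset.map_map, apply_ite (starRingEnd ℂ)]
  · simp only [Multiset.mem_map, not_exists, not_and]
    intro z hz h
    split_ifs at h <;> simp_all
  · simp only [Multiset.mem_map, forall_exists_index, and_imp]
    rintro _ z hz rfl him
    have hz0 : z ≠ 0 := fun h => h0 (h ▸ hz)
    split_ifs at him ⊢ with hre
    · have him' : z.im = 0 := by simpa using him
      simp [Complex.lt_def, him', hre]
    · have hre' : z.re ≠ 0 := fun h => hz0 (Complex.ext h him)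
      simp [Complex.lt_def, him, lt_of_le_of_ne (not_lt.1 hre) hre'.symm]

lemma map_conj_aroots (g : ℝ[X]) : (g.aroots ℂ).map (starRingEnd ℂ) = g.aroots ℂ := by
  have hconj : (g.map (algebraMap ℝ ℂ)).map (starRingEnd ℂ) = g.map (algebraMap ℝ ℂ) := by
    rw [Polynomial.map_map]
    congr 1
    ext x
    simp
  have hroots := (g.map (algebraMap ℝ ℂ)).roots_map_of_injective_of_card_eq_natDegree
    (f := starRingEnd ℂ) (starRingEnd ℂ).injective
    (IsAlgClosed.card_roots_eq_natDegree)
  rw [hconj] at hroots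
  exact hroots

lemma zero_mem_aroots {g : ℝ[X]} (hg : g ≠ 0) : (0 : ℂ) ∈ g.aroots ℂ ↔ g.coeff 0 = 0 := by
  rw [mem_aroots, ← coeff_zero_eq_aeval_zero', FaithfulSMul.algebraMap_eq_zero_iff]
  exact and_iff_right hg

lemma neg_one_pow_card_re_neg_mul_coeff_zero_pos {g : ℝ[X]} (hg : g.Monic) (h0 : g.coeff 0 ≠ 0) :
    0 < (-1) ^ ((g.aroots ℂ).filter fun z => z.re < 0).card *
      ((-1) ^ g.natDegree * g.coeff 0) := by
  have hprod := (IsAlgClosed.splits (g.map (algebraMap ℝ ℂ))).coeff_zero_eq_prod_roots_of_monic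
    (hg.map _)
  have hpos := neg_one_pow_card_re_neg_mul_prod_pos (map_conj_aroots g)
    ((zero_mem_aroots hg.ne_zero).not.2 h0)
  have hval : (g.aroots ℂ).prod = (((-1) ^ g.natDegree * g.coeff 0 : ℝ) : ℂ) := by
    rw [coeff_map, natDegree_map] at hprod
    push_cast
    rw [← Complex.coe_algebraMap, hprod, ← mul_assoc, ← mul_pow]
    simp [aroots]
  rw [hval] at hpos
  exact_mod_cast hpos

lemma neg_one_pow_card_re_neg_mul_coeff_one_pos {f : ℝ[X]} (hf : f.Monic)
    (hroot : (f.aroots ℂ).count 0 = 1) :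
    0 < (-1) ^ ((f.aroots ℂ).filter fun z => z.re < 0).card *
      ((-1) ^ (f.natDegree - 1) * f.coeff 1) := by
  have hzero : f.coeff 0 = 0 :=
    (zero_mem_aroots hf.ne_zero).1 (Multiset.count_pos.1 (by omega))
  obtain ⟨g, rfl⟩ := X_dvd_iff.2 hzero
  have hg : g.Monic := monic_X.of_mul_monic_left hf
  have haroots : (X * g).aroots ℂ = {0} + g.aroots ℂ := by
    rw [aroots_mul hf.ne_zero, aroots_X]
  have hg0 : g.coeff 0 ≠ 0 := fun h => by
    have := Multiset.count_pos.2 ((zero_mem_aroots hg.ne_zero).2 h)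
    rw [haroots, Multiset.count_add, Multiset.count_singleton_self] at hroot
    omega
  simpa [haroots, Multiset.filter_singleton, natDegree_X_mul hg.ne_zero] using
    neg_one_pow_card_re_neg_mul_coeff_zero_pos hg hg0

lemma jacobianMatrix_eq_toMatrix' {p : ℕ} (v : (Fin p → ℝ) → Fin p → ℝ) (ω : Fin p → ℝ) :
    jacobianMatrix v ω = LinearMap.toMatrix' (fderiv ℝ v ω : Module.End ℝ (Fin p → ℝ)) := by
  ext i j
  rw [LinearMap.toMatrix'_apply]
  rfl

lemma signJ_mul_eigenEsymm_pos {p : ℕ} (hp : p ≠ 0) {v : (Fin p → ℝ) → Fin p → ℝ}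
    {ω : Fin p → ℝ}
    (hnd : ((jacobianMatrix v ω).charpoly.aroots ℂ).count 0 = 1) :
    0 < (signJ v ω : ℝ) *
      eigenEsymm (p - 1) (fderiv ℝ v ω : Module.End ℝ (Fin p → ℝ)) := by
  have hcharpoly : (jacobianMatrix v ω).charpoly =
      (fderiv ℝ v ω : Module.End ℝ (Fin p → ℝ)).charpoly := by
    rw [jacobianMatrix_eq_toMatrix', ← LinearMap.charpoly_toMatrix _ (Pi.basisFun ℝ (Fin p))]
    rfl
  have hpos := neg_one_pow_card_re_neg_mul_coeff_one_pos (Matrix.charpoly_monic _) hnd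
  rw [eigenEsymm_eq_coeff_charpoly _ (by simp), Module.finrank_fin_fun, ← hcharpoly,
    Nat.sub_sub_self (Nat.one_le_iff_ne_zero.2 hp)]
  rw [Matrix.charpoly_natDegree_eq_dim, Fintype.card_fin] at hpos
  simp only [signJ, stableCount, Int.cast_pow, Int.cast_neg, Int.cast_one]
  convert hpos

lemma signJ_eq_sign {p : ℕ} (hp : p ≠ 0) {v : (Fin p → ℝ) → Fin p → ℝ} {ω : Fin p → ℝ}
    (hnd : ((jacobianMatrix v ω).charpoly.aroots ℂ).count 0 = 1) :
    signJ v ω = SignType.sign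
      (eigenEsymm (p - 1) (fderiv ℝ v ω : Module.End ℝ (Fin p → ℝ))) := by
  have hpos := signJ_mul_eigenEsymm_pos hp hnd
  rcases neg_one_pow_eq_or ℤ (stableCount v ω) with h | h <;> rw [signJ, h] at hpos ⊢
  · rw [sign_pos (by simpa using hpos)]; rfl
  · rw [sign_neg (by simpa using hpos)]; rfl

end Sign

section LaplaceTransform

variable {Ω : Type*} [MeasurableSpace Ω] {μ : Measure Ω} {X g : Ω → ℝ} {U : Set ℝ}

lemma analyticOnNhd_integral_exp_mul_of_nonneg (hU : IsOpen U) (hg : AEMeasurable g μ)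
    (hg0 : 0 ≤ g) (hint : ∀ s ∈ U, Integrable (fun x => Real.exp (s * X x) * g x) μ) :
    AnalyticOnNhd ℝ (fun s => ∫ x, Real.exp (s * X x) * g x ∂μ) U := by
  let ν := μ.withDensity fun x => ENNReal.ofReal (g x)
  have hdensity (s : ℝ) (x : Ω) :
      (ENNReal.ofReal (g x)).toReal • Real.exp (s * X x) = Real.exp (s * X x) * g x := by
    rw [ENNReal.toReal_ofReal (hg0 x), smul_eq_mul, mul_comm]
  have hmgf : (fun s => ∫ x, Real.exp (s * X x) * g x ∂μ) = ProbabilityTheory.mgf X ν := by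
    funext s
    rw [ProbabilityTheory.mgf, integral_withDensity_eq_integral_toReal_smul₀ hg.ennreal_ofReal
      (.of_forall fun _ => ENNReal.ofReal_lt_top)]
    simp only [hdensity]
  have hsub : U ⊆ interior (ProbabilityTheory.integrableExpSet X ν) := by
    refine interior_maximal (fun s hs => ?_) hU
    refine (integrable_withDensity_iff_integrable_smul₀' hg.ennreal_ofReal
      (.of_forall fun _ => ENNReal.ofReal_lt_top)).2 ?_
    simpa only [hdensity] using hint s hs
  exact hmgf ▸ ProbabilityTheory.analyticOnNhd_mgf.mono hsub

lemma analyticOnNhd_integral_exp_mul (hU : IsOpen U) (hg : AEMeasurable g μ)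
    (hint : ∀ s ∈ U, Integrable (fun x => Real.exp (s * X x) * g x) μ) :
    AnalyticOnNhd ℝ (fun s => ∫ x, Real.exp (s * X x) * g x ∂μ) U := by
  have hpos : ∀ s ∈ U, Integrable (fun x => Real.exp (s * X x) * max (g x) 0) μ := fun s hs =>
    (hint s hs).pos_part.congr (.of_forall fun x => by
      simp only [mul_max_of_nonneg _ _ (Real.exp_pos _).le, mul_zero])
  have hneg : ∀ s ∈ U, Integrable (fun x => Real.exp (s * X x) * max (-g x) 0) μ := fun s hs =>
    (hint s hs).neg_part.congr (.of_forall fun x => by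
      simp only [mul_max_of_nonneg _ _ (Real.exp_pos _).le, mul_zero, mul_neg])
  have hdiff := (analyticOnNhd_integral_exp_mul_of_nonneg (g := fun x => max (g x) 0) hU
    (hg.max aemeasurable_const) (fun x => le_max_right _ _) hpos).sub
    (analyticOnNhd_integral_exp_mul_of_nonneg (g := fun x => max (-g x) 0) hU
      (hg.neg.max aemeasurable_const) (fun x => le_max_right _ _) hneg)
  refine hdiff.congr hU fun s hs => ?_
  rw [Pi.sub_apply, ← integral_sub (hpos s hs) (hneg s hs)]
  simp only [← mul_sub, max_zero_sub_max_neg_zero_eq_self]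

end LaplaceTransform

lemma fderiv_smul_of_map_smul {𝕜 E F : Type*} [NontriviallyNormedField 𝕜] [NormedAddCommGroup E]
    [NormedSpace 𝕜 E] [NormedAddCommGroup F] [NormedSpace 𝕜 F] {f : E → F} {c d : 𝕜} (hc : c ≠ 0)
    (hf : ∀ x, f (c • x) = d • f x) (x : E) :
    fderiv 𝕜 f (c • x) = (c⁻¹ * d) • fderiv 𝕜 f x := by
  have hcomp := fderiv_comp_smul (f := f) (x := x) c
  simp only [hf] at hcomp
  rw [← Pi.smul_def, fderiv_const_smul_field] at hcomp
  rw [mul_smul, ← Pi.smul_apply d, hcomp, inv_smul_smul₀ hc]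

/-- `u` is even, positively homogeneous of degree one, continuously differentiable away from the
origin and tangent to the spheres around it. The steady motions of a degree-two field `v` with
first integral `‖x‖ ^ 2` are studied through the field `‖x‖⁻¹ • v x` of this kind. -/
structure IsEvenTangentField {E : Type*} [NormedAddCommGroup E] [InnerProductSpace ℝ E]
    (u : E → E) : Prop where
  map_smul : ∀ (c : ℝ) (x : E), u (c • x) = |c| • u x
  contDiffOn : ContDiffOn ℝ 1 u {0}ᶜ
  inner_eq_zero : ∀ x, ⟪u x, x⟫ = 0

namespace IsEvenTangentField

variable {E : Type*} [NormedAddCommGroup E] [InnerProductSpace ℝ E] {u : E → E} {x e : E}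

lemma map_zero (h : IsEvenTangentField u) : u 0 = 0 := by
  simpa using h.map_smul 0 0

lemma hasFDerivAt (h : IsEvenTangentField u) (hx : x ≠ 0) : HasFDerivAt u (fderiv ℝ u x) x :=
  ((h.contDiffOn.differentiableOn one_ne_zero).differentiableAt
    (isOpen_compl_singleton.mem_nhds hx)).hasFDerivAt

lemma continuousOn_fderiv (h : IsEvenTangentField u) : ContinuousOn (fderiv ℝ u) {0}ᶜ :=
  h.contDiffOn.continuousOn_fderiv_of_isOpen isOpen_compl_singleton le_rfl

lemma fderiv_smul (h : IsEvenTangentField u) {c : ℝ} (hc : c ≠ 0) (x : E) :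
    fderiv ℝ u (c • x) = (c⁻¹ * |c|) • fderiv ℝ u x :=
  fderiv_smul_of_map_smul hc (h.map_smul c) x

lemma fderiv_self (h : IsEvenTangentField u) (hx : x ≠ 0) : fderiv ℝ u x x = u x := by
  have hray : HasDerivAt (fun t : ℝ => u (t • x)) (fderiv ℝ u x x) 1 := by
    have hline : HasDerivAt (fun t : ℝ => t • x) x 1 := by
      simpa using (hasDerivAt_id (1 : ℝ)).smul_const x
    exact HasFDerivAt.comp_hasDerivAt (1 : ℝ) (by simpa using h.hasFDerivAt hx) hline
  have hlinear : HasDerivAt (fun t : ℝ => u (t • x)) (u x) 1 := by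
    have hid : HasDerivAt (fun t : ℝ => t • u x) (u x) 1 := by
      simpa using (hasDerivAt_id (1 : ℝ)).smul_const (u x)
    refine hid.congr_of_eventuallyEq ?_
    filter_upwards [lt_mem_nhds one_pos] with t ht
    rw [h.map_smul, abs_of_pos ht]
  exact hray.unique hlinear

lemma inner_fderiv_eq_zero (h : IsEvenTangentField u) (hx : x ≠ 0) (hux : u x = 0) (y : E) :
    ⟪x, fderiv ℝ u x y⟫ = 0 := by
  have hderiv := (h.hasFDerivAt hx).inner ℝ (hasFDerivAt_id x)
  have hconst : HasFDerivAt (fun y => ⟪u y, id y⟫) (0 : E →L[ℝ] ℝ) x := by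
    simpa only [id, h.inner_eq_zero] using hasFDerivAt_const (0 : ℝ) x
  have := DFunLike.congr_fun (hderiv.unique hconst) y
  simpa [hux, real_inner_comm] using this

lemma norm_le_of_norm_fderiv_le (h : IsEvenTangentField u) {D : ℝ}
    (hD : ∀ x, x ≠ 0 → ‖fderiv ℝ u x‖ ≤ D) (x : E) : ‖u x‖ ≤ D * ‖x‖ := by
  rcases eq_or_ne x 0 with rfl | hx
  · simp [h.map_zero]
  · rw [← h.fderiv_self hx]
    exact (fderiv ℝ u x).le_of_opNorm_le (hD x hx) x

lemma norm_sub_le_of_norm_fderiv_le (h : IsEvenTangentField u) {D : ℝ}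
    (hD : ∀ x, x ≠ 0 → ‖fderiv ℝ u x‖ ≤ D) (x y : E) : ‖u x - u y‖ ≤ D * ‖x - y‖ := by
  by_cases h0 : (0 : E) ∈ segment ℝ x y
  · have hsum : ‖x‖ + ‖y‖ = ‖x - y‖ := by
      simpa [dist_eq_norm] using dist_add_dist_of_mem_segment h0
    calc ‖u x - u y‖ ≤ ‖u x‖ + ‖u y‖ := norm_sub_le _ _
      _ ≤ D * ‖x‖ + D * ‖y‖ :=
        add_le_add (h.norm_le_of_norm_fderiv_le hD x) (h.norm_le_of_norm_fderiv_le hD y)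
      _ = D * ‖x - y‖ := by rw [← mul_add, hsum]
  · have hne : ∀ z ∈ segment ℝ x y, z ≠ 0 := fun z hz hz0 => h0 (hz0 ▸ hz)
    exact (convex_segment x y).norm_image_sub_le_of_norm_hasFDerivWithin_le
      (fun z hz => (h.hasFDerivAt (hne z hz)).hasFDerivWithinAt) (fun z hz => hD z (hne z hz))
      (right_mem_segment ℝ x y) (left_mem_segment ℝ x y)

section FiniteDimensional

variable [FiniteDimensional ℝ E]

lemma exists_norm_fderiv_le (h : IsEvenTangentField u) : ∃ D : ℝ, ∀ x, ‖fderiv ℝ u x‖ ≤ D := by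
  have hsphere : Metric.sphere (0 : E) 1 ⊆ {0}ᶜ := fun y hy =>
    ne_zero_of_norm_ne_zero (by rw [mem_sphere_zero_iff_norm.1 hy]; exact one_ne_zero)
  obtain ⟨D, hD⟩ := (isCompact_sphere (0 : E) 1).exists_bound_of_continuousOn
    (h.continuousOn_fderiv.mono hsphere)
  -- `u` need not be differentiable at `0`, where `fderiv` may take its junk value.
  refine ⟨max D ‖fderiv ℝ u 0‖, fun x => ?_⟩
  rcases eq_or_ne x 0 with rfl | hx
  · exact le_max_right _ _
  have hunit : ‖x‖⁻¹ • x ∈ Metric.sphere (0 : E) 1 :=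
    mem_sphere_zero_iff_norm.2 (norm_smul_inv_norm (𝕜 := ℝ) hx)
  have hbound := hD _ hunit
  rw [h.fderiv_smul (inv_ne_zero (norm_ne_zero_iff.2 hx)), abs_inv, abs_norm, inv_inv,
    mul_inv_cancel₀ (norm_ne_zero_iff.2 hx), one_smul] at hbound
  exact hbound.trans (le_max_left _ _)

lemma exists_lipschitzWith (h : IsEvenTangentField u) : ∃ K, LipschitzWith K u := by
  obtain ⟨D, hD⟩ := h.exists_norm_fderiv_le
  have hD0 : 0 ≤ D := (norm_nonneg _).trans (hD 0)
  refine ⟨⟨D, hD0⟩, LipschitzWith.of_dist_le_mul fun x y => ?_⟩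
  rw [dist_eq_norm, dist_eq_norm]
  exact h.norm_sub_le_of_norm_fderiv_le (fun x _ => hD x) x y

lemma exists_abs_eigenEsymm_fderiv_le (h : IsEvenTangentField u) (k : ℕ) :
    ∃ C : ℝ, ∀ x, |eigenEsymm k (fderiv ℝ u x : Module.End ℝ E)| ≤ C := by
  obtain ⟨D, hD⟩ := h.exists_norm_fderiv_le
  obtain ⟨C, hC⟩ := (isCompact_closedBall (0 : E →L[ℝ] E) D).exists_bound_of_continuousOn
    (continuous_eigenEsymm k).continuousOn
  exact ⟨C, fun x => hC _ (mem_closedBall_zero_iff.2 (hD x))⟩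

lemma exists_forall_det_one_add_smul_fderiv_pos (h : IsEvenTangentField u) :
    ∃ ε : ℝ, 0 < ε ∧ ∀ t : ℝ, |t| < ε → ∀ x, 0 < (1 + t • fderiv ℝ u x : E →L[ℝ] E).det := by
  obtain ⟨D, hD⟩ := h.exists_norm_fderiv_le
  have hD0 : 0 ≤ D := (norm_nonneg _).trans (hD 0)
  have hopen : {A : E →L[ℝ] E | 0 < A.det} ∈ 𝓝 1 :=
    (isOpen_lt continuous_const ContinuousLinearMap.continuous_det).mem_nhds
      (by simp [ContinuousLinearMap.det])
  obtain ⟨r, hr, hball⟩ := Metric.mem_nhds_iff.1 hopen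
  refine ⟨r / (D + 1), by positivity, fun t ht x => hball ?_⟩
  rw [mem_ball_iff_norm, add_sub_cancel_left, norm_smul, Real.norm_eq_abs]
  calc |t| * ‖fderiv ℝ u x‖ ≤ |t| * (D + 1) := by gcongr; linarith [hD x]
    _ < r := (lt_div_iff₀ (by positivity)).1 ht

end FiniteDimensional

end IsEvenTangentField

lemma bijective_add_of_lipschitzWith {E : Type*} [NormedAddCommGroup E] [NormedSpace ℝ E]
    [CompleteSpace E] {f : E → E} {c : NNReal} (hf : LipschitzWith c f) (hc : c < 1) :
    Function.Bijective fun x => x + f x := by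
  have happrox : ApproximatesLinearOn (fun x => x + f x)
      (ContinuousLinearEquiv.refl ℝ E : E →L[ℝ] E) Set.univ c := by
    intro x _ y _
    calc ‖x + f x - (y + f y) - (x - y)‖ = ‖f x - f y‖ := by congr 1; abel
      _ ≤ c * ‖x - y‖ := hf.norm_sub_le x y
  have hsmall : Subsingleton E ∨
      c < ‖((ContinuousLinearEquiv.refl ℝ E).symm : E →L[ℝ] E)‖₊⁻¹ := by
    rcases subsingleton_or_nontrivial E with hE | hE
    · exact .inl hE
    · have hid : ‖((ContinuousLinearEquiv.refl ℝ E).symm : E →L[ℝ] E)‖₊ = 1 :=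
        NNReal.eq ContinuousLinearMap.norm_id
      exact .inr (by rwa [hid, inv_one])
  exact ⟨Set.injOn_univ.1 (happrox.injOn hsmall), happrox.surjective hsmall⟩

section Gaussian

variable {E : Type*} [NormedAddCommGroup E] [InnerProductSpace ℝ E] [FiniteDimensional ℝ E]
  [MeasurableSpace E] [BorelSpace E]

lemma integral_exp_neg_mul_sq_norm_pos {b : ℝ} (hb : 0 < b) :
    0 < ∫ x : E, Real.exp (-b * ‖x‖ ^ 2) := by
  rw [GaussianFourier.integral_rexp_neg_mul_sq_norm hb]
  positivity

lemma integrable_exp_neg_mul_sq_norm {b : ℝ} (hb : 0 < b) :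
    Integrable fun x : E => Real.exp (-b * ‖x‖ ^ 2) :=
  .of_integral_ne_zero (integral_exp_neg_mul_sq_norm_pos hb).ne'

end Gaussian

/-- The integrand whose total mass does not depend on `s ≥ 0`. For `s = t ^ 2` it averages the
Gaussian, pulled back along `x ↦ x + t • u x` and along `x ↦ x - t • u x`. -/
noncomputable def evenIntegrand {E : Type*} [NormedAddCommGroup E] [NormedSpace ℝ E]
    [FiniteDimensional ℝ E] (u : E → E) (s : ℝ) (x : E) : ℝ :=
  Real.exp (-(‖x‖ ^ 2 + s * ‖u x‖ ^ 2)) * evenDet (fderiv ℝ u x : Module.End ℝ E) s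

lemma evenIntegrand_eq_sum {E : Type*} [NormedAddCommGroup E] [NormedSpace ℝ E]
    [FiniteDimensional ℝ E] (u : E → E) (s : ℝ) (x : E) :
    evenIntegrand u s x = ∑ j ∈ Finset.range (Module.finrank ℝ E / 2 + 1),
      (Real.exp (s * -‖u x‖ ^ 2) * (Real.exp (-‖x‖ ^ 2) *
        eigenEsymm (2 * j) (fderiv ℝ u x : Module.End ℝ E))) * s ^ j := by
  rw [evenIntegrand, evenDet, Finset.mul_sum, neg_add, Real.exp_add]
  refine Finset.sum_congr rfl fun j _ => ?_
  ring_nf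

lemma measurable_eigenEsymm_fderiv {E : Type*} [NormedAddCommGroup E] [NormedSpace ℝ E]
    [FiniteDimensional ℝ E] [MeasurableSpace E] [BorelSpace E] (u : E → E) (k : ℕ) :
    Measurable fun x => eigenEsymm k (fderiv ℝ u x : Module.End ℝ E) :=
  (continuous_eigenEsymm k).measurable.comp (measurable_fderiv ℝ u)

lemma integral_evenIntegrand_sq_of_integral_gaussian_mul_det {E : Type*} [NormedAddCommGroup E]
    [InnerProductSpace ℝ E] [FiniteDimensional ℝ E] [MeasurableSpace E] [BorelSpace E] {u : E → E}
    {t : ℝ}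
    (ht : ∀ t' : ℝ, |t'| = |t| → ∫ x, Real.exp (-(‖x‖ ^ 2 + t' ^ 2 * ‖u x‖ ^ 2)) *
        LinearMap.det (1 + t' • (fderiv ℝ u x : Module.End ℝ E)) =
      ∫ x : E, Real.exp (-‖x‖ ^ 2)) :
    ∫ x, evenIntegrand u (t ^ 2) x = ∫ x : E, Real.exp (-‖x‖ ^ 2) := by
  have hmass : ∫ x : E, Real.exp (-‖x‖ ^ 2) ≠ 0 := by
    simpa using (integral_exp_neg_mul_sq_norm_pos (E := E) one_pos).ne'
  have hplus := ht t rfl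
  have hminus := ht (-t) (abs_neg t)
  have havg : ∫ x, 2 * evenIntegrand u (t ^ 2) x = 2 * ∫ x : E, Real.exp (-‖x‖ ^ 2) := by
    rw [two_mul (∫ x : E, _)]
    nth_rewrite 1 [← hplus]
    rw [← hminus, ← integral_add (.of_integral_ne_zero (hplus ▸ hmass))
      (.of_integral_ne_zero (hminus ▸ hmass))]
    refine integral_congr_ae (.of_forall fun x => ?_)
    simp only [evenIntegrand, neg_sq, ← mul_add, det_one_add_smul_add_det_one_sub_smul]
    ring
  rw [integral_const_mul] at havg
  exact mul_left_cancel₀ two_ne_zero havg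

namespace IsEvenTangentField

variable {E : Type*} [NormedAddCommGroup E] [InnerProductSpace ℝ E] {u : E → E}

lemma norm_add_smul_sq (h : IsEvenTangentField u) (t : ℝ) (x : E) :
    ‖x + t • u x‖ ^ 2 = ‖x‖ ^ 2 + t ^ 2 * ‖u x‖ ^ 2 := by
  rw [norm_add_sq_real, real_inner_smul_right, real_inner_comm, h.inner_eq_zero, norm_smul,
    mul_pow, Real.norm_eq_abs, sq_abs]
  ring

variable [FiniteDimensional ℝ E]

variable [MeasurableSpace E] [BorelSpace E]

lemma exists_forall_integral_gaussian_mul_det [Nontrivial E] (h : IsEvenTangentField u) :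
    ∃ ε : ℝ, 0 < ε ∧ ∀ t : ℝ, |t| < ε →
      ∫ x, Real.exp (-(‖x‖ ^ 2 + t ^ 2 * ‖u x‖ ^ 2)) *
        LinearMap.det (1 + t • (fderiv ℝ u x : Module.End ℝ E)) =
      ∫ x : E, Real.exp (-‖x‖ ^ 2) := by
  obtain ⟨ε, hε, hdet⟩ := h.exists_forall_det_one_add_smul_fderiv_pos
  obtain ⟨K, hK⟩ := h.exists_lipschitzWith
  refine ⟨min ε (1 / (K + 1)), by positivity, fun t ht => ?_⟩
  have htK : ‖t‖₊ * K < 1 := by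
    have hmul := (lt_div_iff₀ (by positivity)).1 (ht.trans_le (min_le_right _ _))
    refine NNReal.coe_lt_coe.1 ?_
    push_cast
    rw [Real.norm_eq_abs]
    linarith [abs_nonneg t]
  have hbij : Function.Bijective fun x => x + t • u x :=
    bijective_add_of_lipschitzWith ((lipschitzWith_smul t).comp hK) htK
  have himage : (fun x => x + t • u x) '' {0}ᶜ = {0}ᶜ := by
    rw [Set.image_compl_eq hbij, Set.image_singleton, h.map_zero, smul_zero, add_zero]
  have hderiv : ∀ x ∈ ({0}ᶜ : Set E),
      HasFDerivWithinAt (fun x => x + t • u x) (1 + t • fderiv ℝ u x) {0}ᶜ x := fun x hx =>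
    ((hasFDerivAt_id x).add ((h.hasFDerivAt hx).const_smul t)).hasFDerivWithinAt
  have hchange := integral_image_eq_integral_abs_det_fderiv_smul volume
    (measurableSet_singleton (0 : E)).compl hderiv hbij.injective.injOn
    fun x => Real.exp (-‖x‖ ^ 2)
  rw [himage, restrict_compl_singleton] at hchange
  rw [hchange]
  refine integral_congr_ae (.of_forall fun x => ?_)
  simp only [h.norm_add_smul_sq, smul_eq_mul]
  rw [abs_of_pos (hdet t (ht.trans_le (min_le_left _ _)) x), mul_comm]
  rfl

lemma exists_integrable_exp_mul_eigenEsymm (h : IsEvenTangentField u) :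
    ∃ b : ℝ, 0 < b ∧ ∀ s : ℝ, -b < s → ∀ k : ℕ, Integrable fun x =>
      Real.exp (s * -‖u x‖ ^ 2) *
        (Real.exp (-‖x‖ ^ 2) * eigenEsymm k (fderiv ℝ u x : Module.End ℝ E)) := by
  obtain ⟨K, hK⟩ := h.exists_lipschitzWith
  have hpos : 0 < (K : ℝ) ^ 2 + 1 := by positivity
  refine ⟨((K : ℝ) ^ 2 + 1)⁻¹, inv_pos.2 hpos, fun s hs k => ?_⟩
  obtain ⟨C, hC⟩ := h.exists_abs_eigenEsymm_fderiv_le k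
  refine ((integrable_exp_neg_mul_sq_norm (inv_pos.2 hpos)).mul_const C).mono' ?_
    (.of_forall fun x => ?_)
  · have := hK.continuous
    exact (by fun_prop : Continuous fun x => Real.exp (s * -‖u x‖ ^ 2)).measurable.mul
      ((by fun_prop : Continuous fun x : E => Real.exp (-‖x‖ ^ 2)).measurable.mul
        (measurable_eigenEsymm_fderiv u k)) |>.aestronglyMeasurable
  · rw [norm_mul, norm_mul, ← mul_assoc, Real.norm_eq_abs, Real.norm_eq_abs, Real.abs_exp,
      Real.abs_exp, ← Real.exp_add]
    refine mul_le_mul (Real.exp_le_exp.2 ?_) (hC x) (norm_nonneg _) (Real.exp_pos _).le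
    have hux : ‖u x‖ ^ 2 ≤ (K * ‖x‖) ^ 2 := by
      gcongr
      exact hK.norm_le_mul h.map_zero x
    have hb : ((K : ℝ) ^ 2 + 1)⁻¹ * ((K : ℝ) ^ 2 + 1) = 1 := inv_mul_cancel₀ hpos.ne'
    nlinarith [inv_pos.2 hpos, sq_nonneg ‖u x‖]

lemma exists_analyticOnNhd_integral_evenIntegrand (h : IsEvenTangentField u) :
    ∃ b : ℝ, 0 < b ∧ AnalyticOnNhd ℝ (fun s => ∫ x, evenIntegrand u s x) (Set.Ioi (-b)) := by
  obtain ⟨b, hb, hint⟩ := h.exists_integrable_exp_mul_eigenEsymm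
  refine ⟨b, hb, ?_⟩
  have hanalytic (j : ℕ) : AnalyticOnNhd ℝ (fun s : ℝ => (∫ x, Real.exp (s * -‖u x‖ ^ 2) *
      (Real.exp (-‖x‖ ^ 2) * eigenEsymm (2 * j) (fderiv ℝ u x : Module.End ℝ E))) * s ^ j)
      (Set.Ioi (-b)) := by
    refine (analyticOnNhd_integral_exp_mul isOpen_Ioi ?_ fun s hs => hint s hs _).mul
      (analyticOnNhd_id.pow j)
    exact ((by fun_prop : Continuous fun x : E => Real.exp (-‖x‖ ^ 2)).measurable.mul
        (measurable_eigenEsymm_fderiv u _)).aemeasurable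
  refine ((Finset.range (Module.finrank ℝ E / 2 + 1)).analyticOnNhd_fun_sum
    fun j _ => hanalytic j).congr isOpen_Ioi fun s hs => ?_
  simp only [evenIntegrand_eq_sum]
  rw [integral_finsetSum _ fun j _ => (hint s hs _).mul_const _]
  simp only [integral_mul_const]

theorem integral_evenIntegrand [Nontrivial E] (h : IsEvenTangentField u) {s : ℝ} (hs : 0 ≤ s) :
    ∫ x, evenIntegrand u s x = ∫ x : E, Real.exp (-‖x‖ ^ 2) := by
  obtain ⟨b, hb, hanalytic⟩ := h.exists_analyticOnNhd_integral_evenIntegrand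
  obtain ⟨ε, hε, hsmall⟩ := h.exists_forall_integral_gaussian_mul_det
  have hnear : ∀ᶠ r in 𝓝 (ε ^ 2 / 2),
      ∫ x, evenIntegrand u r x = ∫ x : E, Real.exp (-‖x‖ ^ 2) := by
    filter_upwards [Ioo_mem_nhds (show 0 < ε ^ 2 / 2 by positivity) (half_lt_self (by positivity))]
      with r hr
    rw [← Real.sq_sqrt hr.1.le]
    refine integral_evenIntegrand_sq_of_integral_gaussian_mul_det fun t ht => hsmall t ?_
    rw [ht, abs_of_nonneg (Real.sqrt_nonneg r)]
    exact (Real.sqrt_lt' hε).2 hr.2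
  exact hanalytic.eqOn_of_preconnected_of_eventuallyEq analyticOnNhd_const isPreconnected_Ioi
    (Set.mem_Ioi.2 (by linarith [sq_nonneg ε])) hnear (Set.mem_Ioi.2 (by linarith))

end IsEvenTangentField

lemma inv_pow_mul_evenDet {K V : Type*} [Field K] [AddCommGroup V] [Module K V]
    [FiniteDimensional K V] (A : Module.End K V) {t : K} (ht : t ≠ 0) :
    t⁻¹ ^ (2 * (Module.finrank K V / 2)) * evenDet A (t ^ 2) =
      ∑ j ∈ Finset.range (Module.finrank K V / 2 + 1),
        eigenEsymm (2 * j) A * (t⁻¹ ^ 2) ^ (Module.finrank K V / 2 - j) := by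
  rw [evenDet, Finset.mul_sum]
  refine Finset.sum_congr rfl fun j hj => ?_
  have hpow : (t⁻¹ ^ 2) ^ (Module.finrank K V / 2) =
      (t⁻¹ ^ 2) ^ (Module.finrank K V / 2 - j) * (t⁻¹ ^ 2) ^ j := by
    rw [← pow_add, Nat.sub_add_cancel (Finset.mem_range_succ_iff.1 hj)]
  rw [pow_mul, hpow, mul_left_comm, mul_assoc, ← mul_pow, ← mul_pow, inv_mul_cancel₀ ht, one_pow,
    one_pow, mul_one]

lemma abs_inv_pow_mul_evenDet_le {V : Type*} [AddCommGroup V] [Module ℝ V] [FiniteDimensional ℝ V]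
    (A : Module.End ℝ V) {t : ℝ} (ht : 1 ≤ t) :
    |t⁻¹ ^ (2 * (Module.finrank ℝ V / 2)) * evenDet A (t ^ 2)| ≤
      ∑ j ∈ Finset.range (Module.finrank ℝ V / 2 + 1), |eigenEsymm (2 * j) A| := by
  have ht0 : 0 < t := one_pos.trans_le ht
  rw [inv_pow_mul_evenDet A ht0.ne']
  refine (Finset.abs_sum_le_sum_abs _ _).trans (Finset.sum_le_sum fun j _ => ?_)
  rw [abs_mul]
  refine mul_le_of_le_one_right (abs_nonneg _) ?_
  rw [abs_of_nonneg (by positivity)]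
  exact pow_le_one₀ (by positivity) (pow_le_one₀ (by positivity) (inv_le_one_of_one_le₀ ht))

lemma tendsto_inv_pow_mul_evenDet {E : Type*} [NormedAddCommGroup E] [NormedSpace ℝ E]
    [FiniteDimensional ℝ E] {A : ℝ → E →L[ℝ] E} {A₀ : E →L[ℝ] E}
    (hA : Tendsto A atTop (𝓝 A₀)) :
    Tendsto (fun t => t⁻¹ ^ (2 * (Module.finrank ℝ E / 2)) *
        evenDet (A t : Module.End ℝ E) (t ^ 2)) atTop
      (𝓝 (eigenEsymm (2 * (Module.finrank ℝ E / 2)) (A₀ : Module.End ℝ E))) := by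
  have hsum : Tendsto (fun t => ∑ j ∈ Finset.range (Module.finrank ℝ E / 2 + 1),
      eigenEsymm (2 * j) (A t : Module.End ℝ E) * (t⁻¹ ^ 2) ^ (Module.finrank ℝ E / 2 - j)) atTop
      (𝓝 (∑ j ∈ Finset.range (Module.finrank ℝ E / 2 + 1),
        eigenEsymm (2 * j) (A₀ : Module.End ℝ E) *
          ((0 : ℝ) ^ 2) ^ (Module.finrank ℝ E / 2 - j))) :=
    tendsto_finsetSum _ fun j _ => (((continuous_eigenEsymm _).tendsto A₀).comp hA).mul
      ((tendsto_inv_atTop_zero.pow 2).pow _)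
  have hlower : ∑ j ∈ Finset.range (Module.finrank ℝ E / 2),
      eigenEsymm (2 * j) (A₀ : Module.End ℝ E) *
        ((0 : ℝ) ^ 2) ^ (Module.finrank ℝ E / 2 - j) = 0 :=
    Finset.sum_eq_zero fun j hj => by
      rw [zero_pow two_ne_zero, zero_pow (Nat.sub_ne_zero_of_lt (Finset.mem_range.1 hj)), mul_zero]
  rw [Finset.sum_range_succ, hlower, zero_add, Nat.sub_self, pow_zero, mul_one] at hsum
  refine hsum.congr' ?_
  filter_upwards [eventually_ne_atTop 0] with t ht using (inv_pow_mul_evenDet _ ht).symm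

lemma integral_eq_abs_det_mul_integral_comp {E : Type*} [NormedAddCommGroup E] [NormedSpace ℝ E]
    [FiniteDimensional ℝ E] [MeasurableSpace E] [BorelSpace E] (μ : Measure E)
    [μ.IsAddHaarMeasure] {L : E →L[ℝ] E} (hL : L.det ≠ 0) (f : E → ℝ) :
    ∫ x, f x ∂μ = |L.det| * ∫ x, f (L x) ∂μ := by
  have hbij : Function.Bijective L :=
    (LinearMap.equivOfDetNeZero (L : E →ₗ[ℝ] E) hL).bijective
  have hchange := integral_image_eq_integral_abs_det_fderiv_smul μ MeasurableSet.univ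
    (fun x _ => L.hasFDerivWithinAt (s := Set.univ) (x := x)) hbij.injective.injOn f
  rw [Set.image_univ, hbij.surjective.range_eq] at hchange
  simpa only [Measure.restrict_univ, smul_eq_mul, integral_const_mul] using hchange

section DoubleCone

variable {E : Type*} [NormedAddCommGroup E] [InnerProductSpace ℝ E] {e f : E} {δ : ℝ}

/-- The open double cone around the axis `ℝ e`, for a unit vector `e`. The parameter `δ` is the
tangent of the opening angle. -/
def doubleCone (e : E) (δ : ℝ) : Set E :=
  {x | ‖x - ⟪e, x⟫ • e‖ < δ * |⟪e, x⟫|}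

lemma isOpen_doubleCone (e : E) (δ : ℝ) : IsOpen (doubleCone e δ) :=
  isOpen_lt (by fun_prop) (by fun_prop)

lemma smul_mem_doubleCone_iff {c : ℝ} (hc : c ≠ 0) {x : E} :
    c • x ∈ doubleCone e δ ↔ x ∈ doubleCone e δ := by
  simp only [doubleCone, Set.mem_ofPred_eq]
  rw [real_inner_smul_right, mul_smul, ← smul_sub, norm_smul, abs_mul, mul_left_comm,
    Real.norm_eq_abs, mul_lt_mul_iff_right₀ (abs_pos.2 hc)]

lemma self_mem_doubleCone (he : ‖e‖ = 1) (hδ : 0 < δ) : e ∈ doubleCone e δ := by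
  simp [doubleCone, he, hδ]

lemma disjoint_doubleCone (he : ‖e‖ = 1) (hf : ‖f‖ = 1) (hδ : 2 * δ ^ 2 ≤ 1 - |⟪e, f⟫|) :
    Disjoint (doubleCone e δ) (doubleCone f δ) := by
  refine Set.disjoint_left.2 fun x hxe hxf => ?_
  set a := ⟪e, x⟫
  set b := ⟪f, x⟫
  have hdist : ‖a • e - b • f‖ < δ * (|a| + |b|) :=
    calc ‖a • e - b • f‖ = ‖(x - b • f) - (x - a • e)‖ := by rw [sub_sub_sub_cancel_left]
      _ ≤ ‖x - b • f‖ + ‖x - a • e‖ := norm_sub_le _ _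
      _ < δ * |b| + δ * |a| := add_lt_add hxf hxe
      _ = δ * (|a| + |b|) := by ring
  have hsq := pow_lt_pow_left₀ hdist (norm_nonneg _) two_ne_zero
  rw [norm_sub_sq_real, norm_smul, norm_smul, he, hf, real_inner_smul_left, real_inner_smul_right,
    mul_one, mul_one, Real.norm_eq_abs, Real.norm_eq_abs] at hsq
  have hcross : a * (b * ⟪e, f⟫) ≤ |a| * |b| * |⟪e, f⟫| := by
    rw [← abs_mul, ← abs_mul, mul_assoc]
    exact le_abs_self _
  nlinarith [sq_nonneg (|a| - |b|), abs_nonneg ⟪e, f⟫, abs_nonneg a, abs_nonneg b]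

lemma norm_sq_eq_inner_sq_add (he : ‖e‖ = 1) (x : E) :
    ‖x‖ ^ 2 = ⟪e, x⟫ ^ 2 + ‖x - ⟪e, x⟫ • e‖ ^ 2 := by
  rw [norm_sub_sq_real, norm_smul, he, real_inner_smul_right, real_inner_comm, Real.norm_eq_abs,
    mul_one, sq_abs]
  ring

/-- The orthogonal projection onto the axis `ℝ e`, for a unit vector `e`. -/
noncomputable def axisProj (e : E) : E →L[ℝ] E :=
  (innerSL ℝ e).smulRight e

@[simp]
lemma axisProj_apply (e x : E) : axisProj e x = ⟪e, x⟫ • e := rfl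

/-- The linear map fixing the axis `ℝ e` pointwise and scaling its orthogonal complement by `c`,
for a unit vector `e`. -/
noncomputable def transverseScale (e : E) (c : ℝ) : E →L[ℝ] E :=
  axisProj e + c • (1 - axisProj e)

lemma transverseScale_apply (e : E) (c : ℝ) (x : E) :
    transverseScale e c x = ⟪e, x⟫ • e + c • (x - ⟪e, x⟫ • e) := rfl

lemma inner_transverseScale (he : ‖e‖ = 1) (c : ℝ) (x : E) :
    ⟪e, transverseScale e c x⟫ = ⟪e, x⟫ := by
  simp [transverseScale_apply, inner_add_right, inner_sub_right, real_inner_smul_right,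
    he]

lemma transverseScale_sub_inner_smul (he : ‖e‖ = 1) (c : ℝ) (x : E) :
    transverseScale e c x - ⟪e, transverseScale e c x⟫ • e = c • (x - ⟪e, x⟫ • e) := by
  rw [inner_transverseScale he, transverseScale_apply, add_sub_cancel_left]

lemma tendsto_transverseScale (e x : E) :
    Tendsto (fun t : ℝ => transverseScale e t⁻¹ x) atTop (𝓝 (⟪e, x⟫ • e)) := by
  simpa [transverseScale_apply] using
    ((tendsto_inv_atTop_zero (𝕜 := ℝ)).smul_const (x - ⟪e, x⟫ • e)).const_add (⟪e, x⟫ • e)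

lemma min_mul_norm_sq_le_of_mul_norm_le (he : ‖e‖ = 1) {c t : ℝ} (hc : 0 ≤ c) (ht : 0 < t)
    {x w : E} (hw : c * ‖transverseScale e t⁻¹ x - ⟪e, transverseScale e t⁻¹ x⟫ • e‖ ≤ ‖w‖) :
    min 1 (c ^ 2) * ‖x‖ ^ 2 ≤ ‖transverseScale e t⁻¹ x‖ ^ 2 + t ^ 2 * ‖w‖ ^ 2 := by
  rw [transverseScale_sub_inner_smul he, norm_smul, Real.norm_of_nonneg (by positivity),
    mul_left_comm, inv_mul_le_iff₀ ht] at hw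
  have haxis : ⟪e, x⟫ ^ 2 ≤ ‖transverseScale e t⁻¹ x‖ ^ 2 := by
    rw [norm_sq_eq_inner_sq_add he, inner_transverseScale he]
    exact le_add_of_nonneg_right (sq_nonneg _)
  calc min 1 (c ^ 2) * ‖x‖ ^ 2
      = min 1 (c ^ 2) * ⟪e, x⟫ ^ 2 + min 1 (c ^ 2) * ‖x - ⟪e, x⟫ • e‖ ^ 2 := by
        rw [← mul_add, ← norm_sq_eq_inner_sq_add he]
    _ ≤ 1 * ⟪e, x⟫ ^ 2 + c ^ 2 * ‖x - ⟪e, x⟫ • e‖ ^ 2 := by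
        gcongr
        exacts [min_le_left _ _, min_le_right _ _]
    _ ≤ ‖transverseScale e t⁻¹ x‖ ^ 2 + t ^ 2 * ‖w‖ ^ 2 := by
        rw [one_mul, ← mul_pow, ← mul_pow]
        gcongr

lemma det_transverseScale [FiniteDimensional ℝ E] (he : ‖e‖ = 1) {c : ℝ} (hc : c ≠ 0) :
    (transverseScale e c).det = c ^ (Module.finrank ℝ E - 1) :=
  det_smulRight_add_smul (φ := (innerSL ℝ e : Module.Dual ℝ E))
    (by simp [he]) hc

lemma eventually_transverseScale_mem_doubleCone (he : ‖e‖ = 1) (hδ : 0 < δ) {x : E}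
    (hx : ⟪e, x⟫ ≠ 0) : ∀ᶠ t : ℝ in atTop, transverseScale e t⁻¹ x ∈ doubleCone e δ := by
  have hlim : Tendsto (fun t : ℝ => ‖t⁻¹ • (x - ⟪e, x⟫ • e)‖) atTop (𝓝 0) := by
    simpa using ((tendsto_inv_atTop_zero (𝕜 := ℝ)).smul_const (x - ⟪e, x⟫ • e)).norm
  filter_upwards [hlim.eventually_lt_const (mul_pos hδ (abs_pos.2 hx))] with t ht
  rwa [doubleCone, Set.mem_ofPred_eq, transverseScale_sub_inner_smul he, inner_transverseScale he]

lemma ae_inner_ne_zero [FiniteDimensional ℝ E] [MeasurableSpace E] [BorelSpace E] (μ : Measure E)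
    [μ.IsAddHaarMeasure] (he : e ≠ 0) : ∀ᵐ x ∂μ, ⟪e, x⟫ ≠ 0 := by
  have hker : (innerSL ℝ e : E →ₗ[ℝ] ℝ).ker ≠ ⊤ := fun htop =>
    he (inner_self_eq_zero.1 (htop ▸ Submodule.mem_top : e ∈ (innerSL ℝ e : E →ₗ[ℝ] ℝ).ker))
  have hnull := measure_eq_zero_iff_ae_notMem.1 (μ.addHaar_submodule _ hker)
  filter_upwards [hnull] with x hx using hx

lemma setIntegral_doubleCone_eq [FiniteDimensional ℝ E] [MeasurableSpace E] [BorelSpace E]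
    (μ : Measure E) [μ.IsAddHaarMeasure] (he : ‖e‖ = 1) {c : ℝ} (hc : 0 < c) (g : E → ℝ) :
    ∫ x in doubleCone e δ, g x ∂μ = ∫ x, c ^ (Module.finrank ℝ E - 1) *
      (doubleCone e δ).indicator g (transverseScale e c x) ∂μ := by
  have hdet := det_transverseScale he hc.ne'
  have hpos := pow_pos hc (Module.finrank ℝ E - 1)
  rw [← integral_indicator (isOpen_doubleCone e δ).measurableSet,
    integral_eq_abs_det_mul_integral_comp μ (hdet ▸ hpos.ne'), hdet, abs_of_pos hpos,
    integral_const_mul]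

end DoubleCone

namespace IsEvenTangentField

variable {E : Type*} [NormedAddCommGroup E] [InnerProductSpace ℝ E] {u : E → E} {e : E}

lemma norm_axisProj_add_fderiv_sq (h : IsEvenTangentField u) (he : ‖e‖ = 1) (hue : u e = 0)
    (x : E) :
    ‖(axisProj e + fderiv ℝ u e) x‖ ^ 2 = ⟪e, x⟫ ^ 2 + ‖fderiv ℝ u e x‖ ^ 2 := by
  rw [add_apply, axisProj_apply, norm_add_sq_real, norm_smul, he,
    real_inner_smul_left, h.inner_fderiv_eq_zero (ne_zero_of_norm_ne_zero (by simp [he])) hue,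
    Real.norm_eq_abs, mul_one, sq_abs]
  ring

lemma tendsto_smul_comp_transverseScale (h : IsEvenTangentField u) (he : e ≠ 0) (hue : u e = 0)
    {x : E} (hx : ⟪e, x⟫ ≠ 0) :
    Tendsto (fun t : ℝ => t • u (transverseScale e t⁻¹ x)) atTop
      (𝓝 ((⟪e, x⟫⁻¹ * |⟪e, x⟫|) • fderiv ℝ u e x)) := by
  have hlim := (h.hasFDerivAt (smul_ne_zero hx he)).lim (x - ⟪e, x⟫ • e) (c := fun t : ℝ => t)
    tendsto_norm_atTop_atTop
  rw [h.fderiv_smul hx, h.map_smul ⟪e, x⟫, hue, smul_zero, smul_apply, map_sub,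
    ContinuousLinearMap.map_smul, h.fderiv_self he, hue, smul_zero, sub_zero] at hlim
  simpa only [sub_zero, transverseScale_apply] using hlim

variable [FiniteDimensional ℝ E]

lemma det_axisProj_add_fderiv (h : IsEvenTangentField u) (he : ‖e‖ = 1) (hue : u e = 0) :
    (axisProj e + fderiv ℝ u e).det =
      eigenEsymm (Module.finrank ℝ E - 1) (fderiv ℝ u e : Module.End ℝ E) := by
  have he0 : e ≠ 0 := ne_zero_of_norm_ne_zero (by simp [he])
  exact det_smulRight_add (φ := (innerSL ℝ e : Module.Dual ℝ E)) (by simp [he])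
    (LinearMap.ext fun y => h.inner_fderiv_eq_zero he0 hue y) ((h.fderiv_self he0).trans hue)

lemma exists_mul_norm_le_norm_fderiv (h : IsEvenTangentField u) (he : ‖e‖ = 1) (hue : u e = 0)
    (hnd : eigenEsymm (Module.finrank ℝ E - 1) (fderiv ℝ u e : Module.End ℝ E) ≠ 0) :
    ∃ c : ℝ, 0 < c ∧ ∀ y, ⟪e, y⟫ = 0 → c * ‖y‖ ≤ ‖fderiv ℝ u e y‖ := by
  rw [← h.det_axisProj_add_fderiv he hue] at hnd
  obtain ⟨K, hK0, hK⟩ := (axisProj e + fderiv ℝ u e : E →ₗ[ℝ] E).exists_antilipschitzWith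
    (by_contra fun hker => hnd (LinearMap.det_eq_zero_iff_ker_ne_bot.2 hker))
  refine ⟨(K : ℝ)⁻¹, inv_pos.2 hK0, fun y hy => ?_⟩
  rw [inv_mul_le_iff₀ (NNReal.coe_pos.2 hK0)]
  simpa [hy] using hK.le_mul_norm_sub y 0

lemma exists_mul_norm_le_norm_add (h : IsEvenTangentField u) (he : ‖e‖ = 1) (hue : u e = 0)
    (hnd : eigenEsymm (Module.finrank ℝ E - 1) (fderiv ℝ u e : Module.End ℝ E) ≠ 0) :
    ∃ c : ℝ, 0 < c ∧ ∀ᶠ y in 𝓝 (0 : E), ⟪e, y⟫ = 0 → c * ‖y‖ ≤ ‖u (e + y)‖ := by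
  obtain ⟨c, hc, hlow⟩ := h.exists_mul_norm_le_norm_fderiv he hue hnd
  refine ⟨c / 2, half_pos hc, ?_⟩
  have hderiv := h.hasFDerivAt (ne_zero_of_norm_ne_zero (by simp [he]) : e ≠ 0)
  filter_upwards [(hasFDerivAt_iff_isLittleO_nhds_zero.1 hderiv).def (half_pos hc)] with y hy hey
  rw [hue, sub_zero] at hy
  have htriangle := norm_sub_norm_le (fderiv ℝ u e y) (u (e + y))
  rw [norm_sub_rev] at htriangle
  linarith [hlow y hey]

lemma exists_mul_norm_sub_le_of_mem_doubleCone (h : IsEvenTangentField u) (he : ‖e‖ = 1)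
    (hue : u e = 0)
    (hnd : eigenEsymm (Module.finrank ℝ E - 1) (fderiv ℝ u e : Module.End ℝ E) ≠ 0) :
    ∃ c : ℝ, 0 < c ∧ ∀ᶠ δ in 𝓝[>] (0 : ℝ), ∀ x ∈ doubleCone e δ,
      c * ‖x - ⟪e, x⟫ • e‖ ≤ ‖u x‖ := by
  obtain ⟨c, hc, hnear⟩ := h.exists_mul_norm_le_norm_add he hue hnd
  obtain ⟨r, hr, hball⟩ := Metric.eventually_nhds_iff.1 hnear
  refine ⟨c, hc, ?_⟩
  filter_upwards [Ioo_mem_nhdsGT hr] with δ hδ x hx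
  set a := ⟪e, x⟫ with ha
  have ha0 : a ≠ 0 := fun h0 => (norm_nonneg _).not_gt (by simpa [doubleCone, ← ha, h0] using hx)
  set y := a⁻¹ • (x - a • e) with hy
  have hay : a • y = x - a • e := smul_inv_smul₀ ha0 _
  have hx_eq : x = a • (e + y) := by rw [smul_add, hay, add_sub_cancel]
  have horth : ⟪e, y⟫ = 0 := by
    simp [hy, real_inner_smul_right, inner_sub_right, he, ← ha]
  have hyr : dist y 0 < r := by
    rw [dist_zero_right, hy, norm_smul, norm_inv, Real.norm_eq_abs,
      inv_mul_lt_iff₀ (abs_pos.2 ha0), mul_comm]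
    exact lt_of_lt_of_le hx (by gcongr; exact hδ.2.le)
  calc c * ‖x - a • e‖ = |a| * (c * ‖y‖) := by
        rw [← hay, norm_smul, Real.norm_eq_abs, mul_left_comm]
    _ ≤ |a| * ‖u (e + y)‖ := by gcongr; exact hball hyr horth
    _ = ‖u x‖ := by rw [hx_eq, h.map_smul, norm_smul, Real.norm_eq_abs, abs_abs]

lemma exists_mul_norm_le_of_isClosed (h : IsEvenTangentField u) {S : Set E} (hS : IsClosed S)
    (hcone : ∀ c : ℝ, 0 < c → ∀ x ∈ S, c • x ∈ S) (hne : ∀ x ∈ S, x ≠ 0 → u x ≠ 0) :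
    ∃ c : ℝ, 0 < c ∧ ∀ x ∈ S, c * ‖x‖ ≤ ‖u x‖ := by
  obtain ⟨K, hK⟩ := h.exists_lipschitzWith
  have hcompact : IsCompact (S ∩ Metric.sphere 0 1) := (isCompact_sphere _ _).inter_left hS
  have hpos : ∀ x ∈ S ∩ Metric.sphere 0 1, 0 < ‖u x‖ := fun x hx =>
    norm_pos_iff.2 (hne x hx.1 (ne_zero_of_mem_unit_sphere ⟨x, hx.2⟩))
  obtain ⟨c, hc, hlow⟩ := hcompact.exists_forall_le' hK.continuous.norm.continuousOn hpos
  refine ⟨c, hc, fun x hx => ?_⟩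
  rcases eq_or_ne x 0 with rfl | hx0
  · simp
  have hunit := hlow (‖x‖⁻¹ • x) ⟨hcone _ (inv_pos.2 (norm_pos_iff.2 hx0)) x hx,
    mem_sphere_zero_iff_norm.2 (norm_smul_inv_norm (𝕜 := ℝ) hx0)⟩
  rw [h.map_smul, norm_smul, Real.norm_eq_abs, abs_abs, abs_of_nonneg (by positivity),
    le_inv_mul_iff₀ (norm_pos_iff.2 hx0), mul_comm] at hunit
  exact hunit

lemma exists_abs_inv_pow_mul_evenIntegrand_le (h : IsEvenTangentField u) :
    ∃ C : ℝ, ∀ t : ℝ, 1 ≤ t → ∀ x,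
      |t⁻¹ ^ (2 * (Module.finrank ℝ E / 2)) * evenIntegrand u (t ^ 2) x| ≤
        C * Real.exp (-(‖x‖ ^ 2 + t ^ 2 * ‖u x‖ ^ 2)) := by
  choose C hC using h.exists_abs_eigenEsymm_fderiv_le
  refine ⟨∑ j ∈ Finset.range (Module.finrank ℝ E / 2 + 1), C (2 * j), fun t ht x => ?_⟩
  rw [evenIntegrand, mul_left_comm, abs_mul, Real.abs_exp, mul_comm]
  gcongr
  exact (abs_inv_pow_mul_evenDet_le _ ht).trans (Finset.sum_le_sum fun j _ => hC _ x)

lemma tendsto_inv_pow_mul_evenIntegrand (h : IsEvenTangentField u) (he : ‖e‖ = 1)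
    (hue : u e = 0) {x : E} (hx : ⟪e, x⟫ ≠ 0) :
    Tendsto (fun t : ℝ => t⁻¹ ^ (2 * (Module.finrank ℝ E / 2)) *
        evenIntegrand u (t ^ 2) (transverseScale e t⁻¹ x)) atTop
      (𝓝 (Real.exp (-‖(axisProj e + fderiv ℝ u e) x‖ ^ 2) *
        eigenEsymm (2 * (Module.finrank ℝ E / 2)) (fderiv ℝ u e : Module.End ℝ E))) := by
  have he0 : e ≠ 0 := ne_zero_of_norm_ne_zero (by simp [he])
  have hxe : ⟪e, x⟫ • e ≠ 0 := smul_ne_zero hx he0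
  have hpoint := tendsto_transverseScale e x
  have hfield := h.tendsto_smul_comp_transverseScale he0 hue hx
  have hderiv := h.fderiv_smul hx e
  set σ := ⟪e, x⟫⁻¹ * |⟪e, x⟫| with hσ
  have hσ_abs : |σ| = 1 := by
    rw [hσ, abs_mul, abs_abs, abs_inv, inv_mul_cancel₀ (abs_ne_zero.2 hx)]
  have hnorm : ‖⟪e, x⟫ • e + σ • fderiv ℝ u e x‖ ^ 2 = ‖(axisProj e + fderiv ℝ u e) x‖ ^ 2 := by
    rw [h.norm_axisProj_add_fderiv_sq he hue, norm_add_sq_real, norm_smul, norm_smul, he,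
      real_inner_smul_left, real_inner_smul_right, h.inner_fderiv_eq_zero he0 hue,
      Real.norm_eq_abs, Real.norm_eq_abs, hσ_abs, mul_one, sq_abs]
    ring
  have hexp := (Real.continuous_exp.tendsto _).comp
    ((hpoint.add hfield).norm.pow 2).neg
  have hdet := tendsto_inv_pow_mul_evenDet
    (((h.continuousOn_fderiv.continuousAt (isOpen_compl_singleton.mem_nhds hxe)).tendsto).comp
      hpoint)
  rw [hderiv, ContinuousLinearMap.toLinearMap_smul, eigenEsymm_smul,
    ← (even_two_mul _).pow_abs, hσ_abs, one_pow, one_mul] at hdet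
  rw [← hnorm]
  refine (hexp.mul hdet).congr fun t => ?_
  rw [evenIntegrand, ← h.norm_add_smul_sq]
  exact mul_left_comm _ _ _

lemma exists_abs_indicator_evenIntegrand_le (h : IsEvenTangentField u) (he : ‖e‖ = 1) {c δ : ℝ}
    (hc : 0 ≤ c) (hlow : ∀ x ∈ doubleCone e δ, c * ‖x - ⟪e, x⟫ • e‖ ≤ ‖u x‖) :
    ∃ C : ℝ, ∀ t : ℝ, 1 ≤ t → ∀ x, |t⁻¹ ^ (2 * (Module.finrank ℝ E / 2)) *
        (doubleCone e δ).indicator (evenIntegrand u (t ^ 2)) (transverseScale e t⁻¹ x)| ≤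
      C * Real.exp (-min 1 (c ^ 2) * ‖x‖ ^ 2) := by
  obtain ⟨C, hC⟩ := h.exists_abs_inv_pow_mul_evenIntegrand_le
  refine ⟨|C|, fun t ht x => ?_⟩
  by_cases hx : transverseScale e t⁻¹ x ∈ doubleCone e δ
  · rw [Set.indicator_of_mem hx, neg_mul]
    refine (hC t ht _).trans ?_
    gcongr
    · exact le_abs_self C
    · exact min_mul_norm_sq_le_of_mul_norm_le he hc (one_pos.trans_le ht) (hlow _ hx)
  · rw [Set.indicator_of_notMem hx, mul_zero, abs_zero]
    positivity

lemma exists_norm_evenIntegrand_le (h : IsEvenTangentField u) {c : ℝ} (hc : 0 < c) :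
    ∃ C : ℝ, 0 ≤ C ∧ ∀ t : ℝ, 1 ≤ t → ∀ x, c * ‖x‖ ≤ ‖u x‖ →
      ‖evenIntegrand u (t ^ 2) x‖ ≤
        C * t ^ (2 * (Module.finrank ℝ E / 2)) * Real.exp (-‖(t * c) • x‖ ^ 2) := by
  obtain ⟨C, hC⟩ := h.exists_abs_inv_pow_mul_evenIntegrand_le
  refine ⟨|C|, abs_nonneg C, fun t ht x hx => ?_⟩
  have ht0 : 0 < t := one_pos.trans_le ht
  have hexp : ‖(t * c) • x‖ ^ 2 ≤ ‖x‖ ^ 2 + t ^ 2 * ‖u x‖ ^ 2 := by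
    rw [norm_smul, Real.norm_of_nonneg (by positivity), mul_assoc, mul_pow]
    exact (mul_le_mul_of_nonneg_left (pow_le_pow_left₀ (by positivity) hx 2)
      (sq_nonneg t)).trans (le_add_of_nonneg_left (sq_nonneg _))
  have hscaled : t⁻¹ ^ (2 * (Module.finrank ℝ E / 2)) * ‖evenIntegrand u (t ^ 2) x‖ ≤
      |C| * Real.exp (-‖(t * c) • x‖ ^ 2) := by
    rw [Real.norm_eq_abs, ← abs_of_pos (pow_pos (inv_pos.2 ht0) _), ← abs_mul]
    refine (hC t ht x).trans ?_
    gcongr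
    exact le_abs_self C
  rwa [inv_pow, inv_mul_le_iff₀ (by positivity), mul_left_comm, ← mul_assoc] at hscaled

variable [MeasurableSpace E] [BorelSpace E]

lemma integrable_evenIntegrand (h : IsEvenTangentField u) {s : ℝ} (hs : 0 ≤ s) :
    Integrable (evenIntegrand u s) := by
  obtain ⟨b, hb, hint⟩ := h.exists_integrable_exp_mul_eigenEsymm
  simp only [funext (evenIntegrand_eq_sum u s)]
  exact integrable_finsetSum _ fun j _ => (hint s (by linarith) _).mul_const _

lemma measurable_evenIntegrand (h : IsEvenTangentField u) (s : ℝ) :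
    Measurable (evenIntegrand u s) := by
  obtain ⟨K, hK⟩ := h.exists_lipschitzWith
  have hu := hK.continuous
  exact (by fun_prop : Continuous fun x => Real.exp (-(‖x‖ ^ 2 + s * ‖u x‖ ^ 2))).measurable.mul
    (Finset.measurable_fun_sum _ fun j _ => (measurable_eigenEsymm_fderiv u _).mul_const _)

lemma integral_exp_neg_norm_axisProj_add_fderiv_sq (h : IsEvenTangentField u) (he : ‖e‖ = 1)
    (hue : u e = 0)
    (hnd : eigenEsymm (Module.finrank ℝ E - 1) (fderiv ℝ u e : Module.End ℝ E) ≠ 0) :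
    ∫ x, Real.exp (-‖(axisProj e + fderiv ℝ u e) x‖ ^ 2) *
        eigenEsymm (Module.finrank ℝ E - 1) (fderiv ℝ u e : Module.End ℝ E) =
      SignType.sign (eigenEsymm (Module.finrank ℝ E - 1) (fderiv ℝ u e : Module.End ℝ E)) *
        ∫ x : E, Real.exp (-‖x‖ ^ 2) := by
  have hdet := h.det_axisProj_add_fderiv he hue
  rw [integral_mul_const, integral_eq_abs_det_mul_integral_comp volume (hdet ▸ hnd)
    fun x => Real.exp (-‖x‖ ^ 2), hdet, ← mul_assoc, sign_mul_abs, mul_comm]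

lemma tendsto_setIntegral_doubleCone (h : IsEvenTangentField u) (hodd : Odd (Module.finrank ℝ E))
    (he : ‖e‖ = 1) (hue : u e = 0)
    (hnd : eigenEsymm (Module.finrank ℝ E - 1) (fderiv ℝ u e : Module.End ℝ E) ≠ 0)
    {c δ : ℝ} (hδ : 0 < δ) (hc : 0 < c)
    (hlow : ∀ x ∈ doubleCone e δ, c * ‖x - ⟪e, x⟫ • e‖ ≤ ‖u x‖) :
    Tendsto (fun t => ∫ x in doubleCone e δ, evenIntegrand u (t ^ 2) x) atTop
      (𝓝 (SignType.sign (eigenEsymm (Module.finrank ℝ E - 1) (fderiv ℝ u e : Module.End ℝ E)) *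
        ∫ x : E, Real.exp (-‖x‖ ^ 2))) := by
  obtain ⟨C, hC⟩ := h.exists_abs_indicator_evenIntegrand_le he hc.le hlow
  rw [← h.integral_exp_neg_norm_axisProj_add_fderiv_sq he hue hnd]
  -- In odd dimension `n`, the Jacobian `t⁻¹ ^ (n - 1)` of `transverseScale e t⁻¹` exactly cancels
  -- the growth of `evenDet`, whose degree in `t` is `2 * (n / 2) = n - 1`.
  have hdominated : Tendsto (fun t : ℝ => ∫ x, t⁻¹ ^ (Module.finrank ℝ E - 1) *
      (doubleCone e δ).indicator (evenIntegrand u (t ^ 2)) (transverseScale e t⁻¹ x)) atTop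
      (𝓝 (∫ x, Real.exp (-‖(axisProj e + fderiv ℝ u e) x‖ ^ 2) *
        eigenEsymm (Module.finrank ℝ E - 1) (fderiv ℝ u e : Module.End ℝ E))) := by
    rw [← Nat.two_mul_odd_div_two (Nat.odd_iff.1 hodd)]
    refine tendsto_integral_filter_of_dominated_convergence
      (fun x => C * Real.exp (-min 1 (c ^ 2) * ‖x‖ ^ 2)) (.of_forall fun t => ?_) ?_
      ((integrable_exp_neg_mul_sq_norm (lt_min one_pos (by positivity))).const_mul _) ?_
    · exact ((((h.measurable_evenIntegrand _).indicator
        (isOpen_doubleCone e δ).measurableSet).comp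
        (transverseScale e t⁻¹).continuous.measurable).const_mul _).aestronglyMeasurable
    · filter_upwards [eventually_ge_atTop 1] with t ht using .of_forall (hC t ht)
    · filter_upwards [ae_inner_ne_zero volume (ne_zero_of_norm_ne_zero (by simp [he]) : e ≠ 0)]
        with x hx
      refine (h.tendsto_inv_pow_mul_evenIntegrand he hue hx).congr' ?_
      filter_upwards [eventually_transverseScale_mem_doubleCone he hδ hx] with t ht
      rw [Set.indicator_of_mem ht]
  refine hdominated.congr' ?_
  filter_upwards [eventually_gt_atTop 0] with t ht
  rw [setIntegral_doubleCone_eq volume he (inv_pos.2 ht)]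

lemma tendsto_setIntegral_of_mul_norm_le (h : IsEvenTangentField u)
    (hodd : Odd (Module.finrank ℝ E)) {S : Set E} (hS : MeasurableSet S) {c : ℝ} (hc : 0 < c)
    (hlow : ∀ x ∈ S, c * ‖x‖ ≤ ‖u x‖) :
    Tendsto (fun t : ℝ => ∫ x in S, evenIntegrand u (t ^ 2) x) atTop (𝓝 0) := by
  obtain ⟨C, hC0, hC⟩ := h.exists_norm_evenIntegrand_le hc
  set n := Module.finrank ℝ E
  set K := C * ((c ^ n)⁻¹ * ∫ x : E, Real.exp (-‖x‖ ^ 2)) with hK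
  have hzero : Tendsto (fun t : ℝ => K * t⁻¹) atTop (𝓝 0) := by
    simpa using (tendsto_inv_atTop_zero (𝕜 := ℝ)).const_mul K
  refine squeeze_zero_norm' ?_ hzero
  filter_upwards [eventually_ge_atTop 1] with t ht
  have : 0 < t := one_pos.trans_le ht
  have hint : Integrable fun x : E => Real.exp (-‖(t * c) • x‖ ^ 2) := by
    simpa [norm_smul, mul_pow] using
      integrable_exp_neg_mul_sq_norm (E := E) (by positivity : 0 < (t * c) ^ 2)
  have hgauss : ∫ x : E, Real.exp (-‖(t * c) • x‖ ^ 2) =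
      ((t * c) ^ n)⁻¹ * ∫ x : E, Real.exp (-‖x‖ ^ 2) := by
    rw [Measure.integral_comp_smul volume (fun x : E => Real.exp (-‖x‖ ^ 2)),
      abs_of_nonneg (by positivity), smul_eq_mul]
  calc ‖∫ x in S, evenIntegrand u (t ^ 2) x‖
      ≤ ∫ x in S, ‖evenIntegrand u (t ^ 2) x‖ := norm_integral_le_integral_norm _
    _ ≤ ∫ x in S, C * t ^ (2 * (n / 2)) * Real.exp (-‖(t * c) • x‖ ^ 2) :=
        setIntegral_mono_on (h.integrable_evenIntegrand (sq_nonneg t)).norm.integrableOn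
          (hint.const_mul _).integrableOn hS fun x hx => hC t ht x (hlow x hx)
    _ ≤ ∫ x, C * t ^ (2 * (n / 2)) * Real.exp (-‖(t * c) • x‖ ^ 2) :=
        setIntegral_le_integral (hint.const_mul _) (.of_forall fun x => by positivity)
    _ = K * t⁻¹ := by
        rw [integral_const_mul, hgauss, hK, Nat.two_mul_odd_div_two (Nat.odd_iff.1 hodd),
          mul_pow, ← mul_pow_sub_one hodd.pos.ne' t]
        field_simp

end IsEvenTangentField

namespace IsEvenTangentField

variable {E ι : Type*} [NormedAddCommGroup E] [InnerProductSpace ℝ E] [FiniteDimensional ℝ E]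
  {u : E → E} {e : ι → E}

lemma exists_pairwise_disjoint_doubleCone [Finite ι] (h : IsEvenTangentField u)
    (he : ∀ k, ‖e k‖ = 1) (hue : ∀ k, u (e k) = 0)
    (hnd : ∀ k, eigenEsymm (Module.finrank ℝ E - 1) (fderiv ℝ u (e k) : Module.End ℝ E) ≠ 0)
    (hsep : Pairwise fun k l => |⟪e k, e l⟫| < 1) :
    ∃ δ : ℝ, 0 < δ ∧ Pairwise (Function.onFun Disjoint fun k => doubleCone (e k) δ) ∧
      ∀ k, ∃ c : ℝ, 0 < c ∧ ∀ x ∈ doubleCone (e k) δ, c * ‖x - ⟪e k, x⟫ • e k‖ ≤ ‖u x‖ := by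
  choose c hc hnear using fun k =>
    h.exists_mul_norm_sub_le_of_mem_doubleCone (he k) (hue k) (hnd k)
  have hsmall : ∀ᶠ δ in 𝓝[>] (0 : ℝ), ∀ k l, k ≠ l → 2 * δ ^ 2 ≤ 1 - |⟪e k, e l⟫| := by
    refine eventually_all.2 fun k => eventually_all.2 fun l => ?_
    by_cases hkl : k = l
    · exact .of_forall fun δ hne => absurd hkl hne
    · have hlim : Tendsto (fun δ : ℝ => 2 * δ ^ 2) (𝓝[>] 0) (𝓝 0) :=
        tendsto_nhdsWithin_of_tendsto_nhds ((by fun_prop : Continuous _).tendsto' _ _ (by simp))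
      filter_upwards [hlim.eventually_le_const (sub_pos.2 (hsep hkl))] with δ hδ _ using hδ
  obtain ⟨δ, ⟨hδ_near, hδ_small⟩, hδ⟩ :=
    (((eventually_all.2 hnear).and hsmall).and self_mem_nhdsWithin).exists
  exact ⟨δ, hδ, fun k l hkl => disjoint_doubleCone (he k) (he l) (hδ_small k l hkl),
    fun k => ⟨c k, hc k, hδ_near k⟩⟩

lemma exists_mul_norm_le_of_notMem_doubleCone (h : IsEvenTangentField u) (he : ∀ k, ‖e k‖ = 1)
    (hz : ∀ x, x ≠ 0 → u x = 0 → ∃ k, ∃ a : ℝ, x = a • e k) {δ : ℝ} (hδ : 0 < δ) :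
    ∃ c : ℝ, 0 < c ∧ ∀ x ∈ (⋃ k, doubleCone (e k) δ)ᶜ, c * ‖x‖ ≤ ‖u x‖ := by
  have hopen := isOpen_iUnion fun k => isOpen_doubleCone (e k) δ
  refine h.exists_mul_norm_le_of_isClosed hopen.isClosed_compl (fun c hc x hx => ?_)
    fun x hx hx0 hux => ?_
  · simpa only [Set.mem_compl_iff, Set.mem_iUnion, smul_mem_doubleCone_iff hc.ne'] using hx
  · obtain ⟨k, a, rfl⟩ := hz x hx0 hux
    have ha : a ≠ 0 := left_ne_zero_of_smul hx0
    exact hx (Set.mem_iUnion.2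
      ⟨k, (smul_mem_doubleCone_iff ha).2 (self_mem_doubleCone (he k) hδ)⟩)

theorem sum_sign_eigenEsymm_fderiv [Fintype ι] (h : IsEvenTangentField u)
    (hodd : Odd (Module.finrank ℝ E)) (he : ∀ k, ‖e k‖ = 1) (hue : ∀ k, u (e k) = 0)
    (hnd : ∀ k, eigenEsymm (Module.finrank ℝ E - 1) (fderiv ℝ u (e k) : Module.End ℝ E) ≠ 0)
    (hsep : Pairwise fun k l => |⟪e k, e l⟫| < 1)
    (hz : ∀ x, x ≠ 0 → u x = 0 → ∃ k, ∃ a : ℝ, x = a • e k) :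
    ∑ k, (SignType.sign
      (eigenEsymm (Module.finrank ℝ E - 1) (fderiv ℝ u (e k) : Module.End ℝ E)) : ℝ) = 1 := by
  borelize E
  have : Nontrivial E := Module.nontrivial_of_finrank_pos hodd.pos
  obtain ⟨δ, hδ, hdisj, hnear⟩ := h.exists_pairwise_disjoint_doubleCone he hue hnd hsep
  obtain ⟨m, hm, hfar⟩ := h.exists_mul_norm_le_of_notMem_doubleCone he hz hδ
  have hmeas k : MeasurableSet (doubleCone (e k) δ) := (isOpen_doubleCone (e k) δ).measurableSet
  have hinside k : Tendsto (fun t => ∫ x in doubleCone (e k) δ, evenIntegrand u (t ^ 2) x) atTop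
      (𝓝 (SignType.sign (eigenEsymm (Module.finrank ℝ E - 1)
        (fderiv ℝ u (e k) : Module.End ℝ E)) * ∫ x : E, Real.exp (-‖x‖ ^ 2))) := by
    obtain ⟨c, hc, hlow⟩ := hnear k
    exact h.tendsto_setIntegral_doubleCone hodd (he k) (hue k) (hnd k) hδ hc hlow
  have houtside := h.tendsto_setIntegral_of_mul_norm_le hodd
    (MeasurableSet.iUnion hmeas).compl hm hfar
  have htotal (t : ℝ) : (∑ k, ∫ x in doubleCone (e k) δ, evenIntegrand u (t ^ 2) x) +
      ∫ x in (⋃ k, doubleCone (e k) δ)ᶜ, evenIntegrand u (t ^ 2) x =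
      ∫ x : E, Real.exp (-‖x‖ ^ 2) := by
    have hint := h.integrable_evenIntegrand (sq_nonneg t)
    rw [← integral_iUnion_fintype hmeas hdisj fun k => hint.integrableOn,
      integral_add_compl (MeasurableSet.iUnion hmeas) hint,
      h.integral_evenIntegrand (sq_nonneg t)]
  have hlimit := tendsto_nhds_unique
    (((tendsto_finsetSum Finset.univ fun k _ => hinside k).add houtside).congr htotal)
    tendsto_const_nhds
  have hgauss : 0 < ∫ x : E, Real.exp (-‖x‖ ^ 2) := by
    simpa using integral_exp_neg_mul_sq_norm_pos (E := E) one_pos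
  rw [add_zero, ← Finset.sum_mul] at hlimit
  exact (mul_eq_right₀ hgauss.ne').1 hlimit

end IsEvenTangentField

/-- The nonzero zeros of `v` form the pairwise distinct punctured lines spanned by the vectors
`w k`: these are the straight lines of steady motions of `v`, each given by a point on it. -/
structure SpansZeroLines {V ι : Type*} [AddCommGroup V] [Module ℝ V] (v : V → V) (w : ι → V) :
    Prop where
  ne_zero : ∀ k, w k ≠ 0
  injective_span : Function.Injective fun k => ℝ ∙ w k
  eq_zero_iff : ∀ x, x ≠ 0 → (v x = 0 ↔ ∃ k, x ∈ ℝ ∙ w k)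

namespace SpansZeroLines

variable {V W ι : Type*} [AddCommGroup V] [Module ℝ V] [AddCommGroup W] [Module ℝ W]
  {v : V → V} {w : ι → V}

lemma eq_zero (hw : SpansZeroLines v w) (k : ι) : v (w k) = 0 :=
  (hw.eq_zero_iff _ (hw.ne_zero k)).2 ⟨k, Submodule.mem_span_singleton_self _⟩

lemma conj (hw : SpansZeroLines v w) (T : V ≃ₗ[ℝ] W) :
    SpansZeroLines (T ∘ v ∘ T.symm) (T ∘ w) where
  ne_zero k := T.map_ne_zero_iff.2 (hw.ne_zero k)
  injective_span := by
    have hspan : (fun k => ℝ ∙ (T ∘ w) k) = Submodule.map (T : V →ₗ[ℝ] W) ∘ fun k => ℝ ∙ w k := by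
      ext1 k
      simp [Submodule.map_span]
    rw [hspan]
    exact (Submodule.map_injective_of_injective T.injective).comp hw.injective_span
  eq_zero_iff y hy := by
    have hmem (k : ι) : y ∈ ℝ ∙ T (w k) ↔ T.symm y ∈ ℝ ∙ w k := by
      simp only [Submodule.mem_span_singleton, ← map_smul, LinearEquiv.eq_symm_apply]
    simp only [Function.comp_apply, hmem, T.map_eq_zero_iff,
      hw.eq_zero_iff _ (T.symm.map_ne_zero_iff.2 hy)]

end SpansZeroLines

section InnerProductSpace

variable {E ι : Type*} [NormedAddCommGroup E] [InnerProductSpace ℝ E] {v : E → E} {w : ι → E}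

lemma isEvenTangentField_inv_norm_smul (hcd : ContDiff ℝ 1 v)
    (hhom : ∀ (c : ℝ) x, v (c • x) = c ^ 2 • v x) (hint : ∀ x, ⟪v x, x⟫ = 0) :
    IsEvenTangentField fun x => ‖x‖⁻¹ • v x where
  map_smul c x := by
    rcases eq_or_ne c 0 with rfl | hc
    · simp
    · rw [hhom, norm_smul, Real.norm_eq_abs, smul_smul, smul_smul, mul_inv, ← sq_abs]
      congr 1
      field_simp [abs_ne_zero.2 hc]
  contDiffOn := fun x hx => ((contDiffAt_norm ℝ hx).inv (norm_ne_zero_iff.2 hx)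
    |>.smul hcd.contDiffAt).contDiffWithinAt
  inner_eq_zero x := by rw [real_inner_smul_left, hint, mul_zero]

lemma fderiv_inv_norm_smul {x : E} (hx : x ≠ 0) (hv : DifferentiableAt ℝ v x) (hvx : v x = 0) :
    fderiv ℝ (fun y => ‖y‖⁻¹ • v y) x = ‖x‖⁻¹ • fderiv ℝ v x := by
  have hscale : DifferentiableAt ℝ (fun y : E => ‖y‖⁻¹) x :=
    ((contDiffAt_norm ℝ hx).differentiableAt one_ne_zero).inv (norm_ne_zero_iff.2 hx)
  ext y
  simp [fderiv_fun_smul hscale hv, hvx]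

lemma abs_inner_inv_norm_smul_lt_one {x y : E} (hxy : ℝ ∙ x ≠ ℝ ∙ y) :
    |⟪‖x‖⁻¹ • x, ‖y‖⁻¹ • y⟫| < 1 := by
  have hcalc : ⟪‖x‖⁻¹ • x, ‖y‖⁻¹ • y⟫ = ⟪x, y⟫ / (‖x‖ * ‖y‖) := by
    rw [real_inner_smul_left, real_inner_smul_right]
    ring
  rw [hcalc]
  refine (abs_real_inner_div_norm_mul_norm_le_one x y).lt_of_ne fun heq => hxy ?_
  obtain ⟨-, r, hr, rfl⟩ := (abs_real_inner_div_norm_mul_norm_eq_one_iff x y).1 heq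
  exact (Submodule.span_singleton_smul_eq hr.isUnit x).symm

theorem sum_sign_eigenEsymm_fderiv_of_inner_eq_zero [FiniteDimensional ℝ E] [Fintype ι]
    (hodd : Odd (Module.finrank ℝ E)) (hcd : ContDiff ℝ 1 v)
    (hhom : ∀ (c : ℝ) x, v (c • x) = c ^ 2 • v x) (hint : ∀ x, ⟪v x, x⟫ = 0)
    (hw : SpansZeroLines v w)
    (hnd : ∀ k, eigenEsymm (Module.finrank ℝ E - 1) (fderiv ℝ v (w k) : Module.End ℝ E) ≠ 0) :
    ∑ k, (SignType.sign
      (eigenEsymm (Module.finrank ℝ E - 1) (fderiv ℝ v (w k) : Module.End ℝ E)) : ℝ) = 1 := by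
  have hu := isEvenTangentField_inv_norm_smul hcd hhom hint
  set u : E → E := fun x => ‖x‖⁻¹ • v x
  set e : ι → E := fun k => ‖w k‖⁻¹ • w k with he
  have hpos k : 0 < ‖w k‖⁻¹ := inv_pos.2 (norm_pos_iff.2 (hw.ne_zero k))
  have hfderiv k : fderiv ℝ u (e k) = ‖w k‖⁻¹ • fderiv ℝ v (w k) := by
    rw [he, hu.fderiv_smul (hpos k).ne', abs_of_pos (hpos k), inv_mul_cancel₀ (hpos k).ne',
      one_smul, fderiv_inv_norm_smul (hw.ne_zero k) (hcd.differentiable one_ne_zero _)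
      (hw.eq_zero k)]
  have hesymm k : eigenEsymm (Module.finrank ℝ E - 1) (fderiv ℝ u (e k) : Module.End ℝ E) =
      ‖w k‖⁻¹ ^ (Module.finrank ℝ E - 1) *
        eigenEsymm (Module.finrank ℝ E - 1) (fderiv ℝ v (w k) : Module.End ℝ E) := by
    rw [hfderiv, ContinuousLinearMap.toLinearMap_smul, eigenEsymm_smul]
  have hsum := hu.sum_sign_eigenEsymm_fderiv hodd (e := e)
    (fun k => norm_smul_inv_norm (𝕜 := ℝ) (hw.ne_zero k))
    (fun k => by simp only [u, e, hhom, hw.eq_zero, smul_zero])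
    (fun k => by rw [hesymm]; exact mul_ne_zero (pow_pos (hpos k) _).ne' (hnd k))
    (fun k l hkl => abs_inner_inv_norm_smul_lt_one (hw.injective_span.ne hkl))
    (fun x hx hux => by
      have hvx := (smul_eq_zero_iff_right (inv_ne_zero (norm_ne_zero_iff.2 hx))).1 hux
      obtain ⟨k, hk⟩ := (hw.eq_zero_iff x hx).1 hvx
      obtain ⟨a, rfl⟩ := Submodule.mem_span_singleton.1 hk
      exact ⟨k, a * ‖w k‖, by rw [he, smul_smul, mul_assoc,
        mul_inv_cancel₀ (norm_ne_zero_iff.2 (hw.ne_zero k)), mul_one]⟩)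
  simpa only [hesymm, sign_mul, sign_pos (pow_pos (hpos _) _), one_mul] using hsum

end InnerProductSpace

lemma fderiv_continuousLinearEquiv_conj {𝕜 V W : Type*} [NontriviallyNormedField 𝕜]
    [NormedAddCommGroup V] [NormedSpace 𝕜 V] [NormedAddCommGroup W] [NormedSpace 𝕜 W]
    (T : V ≃L[𝕜] W) (v : V → V) (x : V) :
    (fderiv 𝕜 (T ∘ v ∘ T.symm) (T x) : Module.End 𝕜 W) =
      T.toLinearEquiv.conj (fderiv 𝕜 v x : Module.End 𝕜 V) := by
  ext y
  rw [T.comp_fderiv, T.symm.comp_right_fderiv, T.symm_apply_apply]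
  rfl

lemma exists_linearEquiv_inner_eq {V : Type*} [AddCommGroup V] [Module ℝ V]
    [FiniteDimensional ℝ V] (B : V →ₗ[ℝ] V →ₗ[ℝ] ℝ) (hsymm : ∀ x y, B x y = B y x)
    (hposdef : ∀ x, x ≠ 0 → 0 < B x x) :
    ∃ T : V ≃ₗ[ℝ] EuclideanSpace ℝ (Fin (Module.finrank ℝ V)), ∀ x y, ⟪T x, T y⟫ = B x y := by
  let core : InnerProductSpace.Core ℝ V :=
    { inner x y := B x y
      conj_inner_symm x y := hsymm y x
      re_inner_nonneg x := by
        rcases eq_or_ne x 0 with rfl | hx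
        · simp
        · exact (hposdef x hx).le
      add_left x y z := by simp
      smul_left x y r := by simp
      definite x hx := by_contra fun hne => (hposdef x hne).ne' hx }
  let : NormedAddCommGroup V := core.toNormedAddCommGroup
  let : InnerProductSpace ℝ V := .ofCore core.toCore
  exact ⟨(stdOrthonormalBasis ℝ V).repr.toLinearEquiv,
    (stdOrthonormalBasis ℝ V).repr.inner_map_map⟩

theorem sum_sign_eigenEsymm_fderiv_of_posDef {V ι : Type*} [NormedAddCommGroup V]
    [NormedSpace ℝ V] [FiniteDimensional ℝ V] [Fintype ι] {v : V → V} {w : ι → V}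
    (hodd : Odd (Module.finrank ℝ V)) (hcd : ContDiff ℝ 1 v)
    (hhom : ∀ (c : ℝ) x, v (c • x) = c ^ 2 • v x) {B : V →ₗ[ℝ] V →ₗ[ℝ] ℝ}
    (hsymm : ∀ x y, B x y = B y x) (hposdef : ∀ x, x ≠ 0 → 0 < B x x)
    (hint : ∀ x, B (v x) x = 0) (hw : SpansZeroLines v w)
    (hnd : ∀ k, eigenEsymm (Module.finrank ℝ V - 1) (fderiv ℝ v (w k) : Module.End ℝ V) ≠ 0) :
    ∑ k, (SignType.sign
      (eigenEsymm (Module.finrank ℝ V - 1) (fderiv ℝ v (w k) : Module.End ℝ V)) : ℝ) = 1 := by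
  obtain ⟨T, hT⟩ := exists_linearEquiv_inner_eq B hsymm hposdef
  have hesymm k : eigenEsymm (Module.finrank ℝ V - 1) (fderiv ℝ (T ∘ v ∘ T.symm) (T (w k)) :
      Module.End ℝ (EuclideanSpace ℝ (Fin (Module.finrank ℝ V)))) =
      eigenEsymm (Module.finrank ℝ V - 1) (fderiv ℝ v (w k) : Module.End ℝ V) := by
    rw [← eigenEsymm_conj _ T]
    exact congrArg _ (fderiv_continuousLinearEquiv_conj T.toContinuousLinearEquiv v (w k))
  have hsum := sum_sign_eigenEsymm_fderiv_of_inner_eq_zero (v := T ∘ v ∘ T.symm) (w := T ∘ w)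
    (by rwa [finrank_euclideanSpace_fin])
    (T.toContinuousLinearEquiv.contDiff.comp
      (hcd.comp T.toContinuousLinearEquiv.symm.contDiff))
    (fun c x => by simp only [Function.comp_apply, map_smul, hhom])
    (fun x => by rw [← T.apply_symm_apply x]; simp only [Function.comp_apply,
      T.symm_apply_apply, hT, hint])
    (hw.conj T)
  simp only [finrank_euclideanSpace_fin, Function.comp_apply, hesymm] at hsum
  exact hsum hnd

lemma spansZeroLines_of_zeros_eq {V ι : Type*} [AddCommGroup V] [Module ℝ V] {v : V → V}
    {w : ι → V} {ℓ : ι → Submodule ℝ V} (hdim : ∀ k, Module.finrank ℝ (ℓ k) = 1)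
    (hdistinct : Function.Injective ℓ)
    (hzeros : {x | x ≠ 0 ∧ v x = 0} = ⋃ k, ((ℓ k : Set V) \ {0}))
    (hw : ∀ k, w k ∈ ℓ k ∧ w k ≠ 0) : SpansZeroLines v w := by
  have hspan : ℓ = fun k => ℝ ∙ w k :=
    funext fun k =>
      eq_span_singleton_of_mem_of_finrank_eq_one (hdim k) (hw k).1 (hw k).2
  subst hspan
  refine ⟨fun k => (hw k).2, hdistinct, fun x hx => ?_⟩
  simpa [hx] using Set.ext_iff.1 hzeros x

lemma signJ_neg {p : ℕ} (hp : p ≠ 0) {v : (Fin p → ℝ) → Fin p → ℝ}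
    (hhom : ∀ (c : ℝ) ω, v (c • ω) = c ^ 2 • v ω) {ω : Fin p → ℝ}
    (hnd : ((jacobianMatrix v ω).charpoly.aroots ℂ).count 0 = 1)
    (hnd_neg : ((jacobianMatrix v (-ω)).charpoly.aroots ℂ).count 0 = 1) :
    signJ v (-ω) = (-1) ^ (p + 1) * signJ v ω := by
  obtain ⟨n, rfl⟩ := Nat.exists_eq_succ_of_ne_zero hp
  have hfderiv : fderiv ℝ v (-ω) = -fderiv ℝ v ω := by
    simpa using fderiv_smul_of_map_smul (neg_ne_zero.2 one_ne_zero) (hhom (-1)) ω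
  rw [signJ_eq_sign hp hnd, signJ_eq_sign hp hnd_neg, hfderiv, ← neg_one_smul ℝ,
    ContinuousLinearMap.toLinearMap_smul, eigenEsymm_smul, sign_mul, sign_pow,
    sign_neg neg_one_lt_zero]
  push_cast
  simp [pow_succ]

lemma sum_signJ_eq_one {p : ℕ} (hp : Odd p) {v : (Fin p → ℝ) → Fin p → ℝ}
    (hcd : ContDiff ℝ 1 v) (hhom : ∀ (c : ℝ) ω, v (c • ω) = c ^ 2 • v ω)
    {B : (Fin p → ℝ) →ₗ[ℝ] (Fin p → ℝ) →ₗ[ℝ] ℝ} (hsymm : ∀ x y, B x y = B y x)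
    (hposdef : ∀ x, x ≠ 0 → 0 < B x x) (hint : ∀ ω, B (v ω) ω = 0) {ι : Type*} [Fintype ι]
    {w : ι → Fin p → ℝ} (hw : SpansZeroLines v w)
    (hnd : ∀ k, ((jacobianMatrix v (w k)).charpoly.aroots ℂ).count 0 = 1) :
    ∑ k, signJ v (w k) = 1 := by
  have hesymm k : eigenEsymm (p - 1) (fderiv ℝ v (w k) : Module.End ℝ (Fin p → ℝ)) ≠ 0 :=
    right_ne_zero_of_mul (signJ_mul_eigenEsymm_pos hp.pos.ne' (hnd k)).ne'
  have hsum := sum_sign_eigenEsymm_fderiv_of_posDef (by rwa [Module.finrank_fin_fun]) hcd hhom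
    hsymm hposdef hint hw (by simpa only [Module.finrank_fin_fun] using hesymm)
  rw [Module.finrank_fin_fun] at hsum
  have hsum_cast : ((∑ k, signJ v (w k) : ℤ) : ℝ) = 1 := by
    simpa only [signJ_eq_sign hp.pos.ne' (hnd _), Int.cast_sum, SignType.intCast_cast] using hsum
  exact_mod_cast hsum_cast

/-- (Theorem 3 of the paper.) Let `v : ℝᵖ → ℝᵖ` be `C¹` and
homogeneous of degree 2, admitting a positive definite quadratic first integral
(`B(v(ω), ω) = 0` for a symmetric positive definite bilinear form `B`).  If the
nonzero zero set of `v` is the union of finitely many punctured lines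
`ℓ₁, …, ℓ_N` (distinct one-dimensional subspaces), all nondegenerate, then the sum
of the indices `i_k = j(ω_k) + j(−ω_k)` over the straight lines of steady motions
equals `1 + (−1)^{p+1}`. -/
theorem sum_of_indices_of_slsm
    (p : ℕ) (v : (Fin p → ℝ) → (Fin p → ℝ))
    (hcd : ContDiff ℝ 1 v)
    (hhom : ∀ (c : ℝ) (ω : Fin p → ℝ), v (c • ω) = c ^ 2 • v ω)
    (B : (Fin p → ℝ) →ₗ[ℝ] (Fin p → ℝ) →ₗ[ℝ] ℝ)
    (hsymm : ∀ x y, B x y = B y x)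
    (hposdef : ∀ x : Fin p → ℝ, x ≠ 0 → 0 < B x x)
    (hint : ∀ ω, B (v ω) ω = 0)
    (N : ℕ) (ℓ : Fin N → Submodule ℝ (Fin p → ℝ))
    (hdim : ∀ k, Module.finrank ℝ (ℓ k) = 1)
    (hdistinct : Function.Injective ℓ)
    (hzeros : {ω : Fin p → ℝ | ω ≠ 0 ∧ v ω = 0} =
      ⋃ k : Fin N, ((ℓ k : Set (Fin p → ℝ)) \ {0}))
    (hnd : ∀ ω : Fin p → ℝ, ω ≠ 0 → v ω = 0 →
      Multiset.count 0 ((jacobianMatrix v ω).charpoly.aroots ℂ) = 1)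
    (w : Fin N → Fin p → ℝ)
    (hw : ∀ k, w k ∈ ℓ k ∧ w k ≠ 0) :
    (∑ k : Fin N, (signJ v (w k) + signJ v (-(w k)))) = 1 + (-1 : ℤ) ^ (p + 1) := by
  have hlines : SpansZeroLines v w := spansZeroLines_of_zeros_eq hdim hdistinct hzeros hw
  have hnd_line k : ((jacobianMatrix v (w k)).charpoly.aroots ℂ).count 0 = 1 :=
    hnd _ (hlines.ne_zero k) (hlines.eq_zero k)
  have hindex k : signJ v (w k) + signJ v (-(w k)) = (1 + (-1) ^ (p + 1)) * signJ v (w k) := by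
    have hp : p ≠ 0 := by
      rintro rfl
      exact hlines.ne_zero k (Subsingleton.elim _ _)
    have hv_neg : v (-(w k)) = 0 := by simpa [hlines.eq_zero k] using hhom (-1) (w k)
    rw [signJ_neg hp hhom (hnd_line k) (hnd _ (neg_ne_zero.2 (hlines.ne_zero k)) hv_neg)]
    ring
  rw [Finset.sum_congr rfl fun k _ => hindex k, ← Finset.mul_sum]
  rcases Nat.even_or_odd p with heven | hodd
  · rw [heven.add_one.neg_one_pow, add_neg_cancel, zero_mul]
  · rw [sum_signJ_eq_one hodd hcd hhom hsymm hposdef hint hlines hnd_line, mul_one]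
end

section
/- Let p be odd and let v : ℝ^p → ℝ^p be continuous and homogeneous of degree 2 (v(λω) = λ²v(ω) for all λ ∈ ℝ, ω ∈ ℝ^p), and suppose there is a symmetric positive definite bilinear form B on ℝ^p such that B(v(ω), ω) = 0 for all ω (the corresponding positive definite quadratic form is a first integral of ω̇ = v(ω)). Then v has a nonzero steady state: there exists ω₀ ≠ 0 with v(ω₀) = 0; in particular at least one straight line of steady motions exists. -/
/-!
In odd dimension every continuous field on the unit sphere is radial somewhere; where `v` is radial,
conservation of a positive definite form forces `v` to vanish.

The first fact is the hairy ball theorem, by the argument of Milnor and Rogers. A field that is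
nowhere radial can be smoothed, projected to the tangent spaces, normalised and extended to a
Lipschitz field `w` with `‖w x‖ = ‖x‖` and `w x ⊥ x`. For small `t` the map `x ↦ x + t • w x` is a
bijection multiplying norms by `√(1 + t²)`, so it multiplies the volume of the unit ball of an
`n`-dimensional space by `√(1 + t²) ^ n`. By the change of variables formula this volume is also the
integral of `det (1 + t • w')`, a polynomial in `t`. Hence `(1 + t²) ^ n` is, up to a constant, the
square of a polynomial, and `n` is even.
-/

open Polynomial MeasureTheory Module Metric Set Topology
open scoped RealInnerProductSpace NNReal

section Polynomials

theorem even_of_sq_eq_C_mul_X_sq_add_one_pow {R : Type*} [CommRing R] [IsDomain R] [NeZero (2 : R)]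
    {P : R[X]} {c : R} {n : ℕ} (hc : c ≠ 0) (hP : P ^ 2 = C c * (X ^ 2 + 1) ^ n) : Even n := by
  have h_eval_zero : P.eval 0 ≠ 0 := by
    intro h
    have := congrArg (eval 0) hP
    simp only [eval_pow, h, eval_mul, eval_C, eval_add, eval_X, eval_one] at this
    simp [eq_comm, hc] at this
  have h_natDegree : P.natDegree = n := by
    have := congrArg natDegree hP
    rw [natDegree_pow, natDegree_C_mul hc, natDegree_pow, ← C_1, natDegree_X_pow_add_C] at this
    lia
  have h_comp_sq : P.comp (-X) ^ 2 = P ^ 2 := by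
    rw [← pow_comp, hP]
    simp
  -- The sign is determined at `0`, so `P` is an even polynomial.
  have h_comp : P.comp (-X) = P := by
    refine (sq_eq_sq_iff_eq_or_eq_neg.1 h_comp_sq).resolve_right fun h => h_eval_zero ?_
    have := congrArg (eval 0) h
    simpa [eq_neg_iff_add_eq_zero, ← two_mul, two_ne_zero] using this
  have h_lead : (-1) ^ n * P.leadingCoeff = 1 * P.leadingCoeff := by
    rw [← h_natDegree, ← comp_neg_X_leadingCoeff_eq, h_comp, one_mul]
  have h_lead_ne : P.leadingCoeff ≠ 0 :=
    leadingCoeff_ne_zero.2 fun h => h_eval_zero (by rw [h, eval_zero])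
  have h_neg_one : (-1 : R) ≠ 1 := fun h =>
    two_ne_zero (α := R) (by rw [← one_add_one_eq_two, ← neg_eq_iff_add_eq_zero, h])
  exact (neg_one_pow_eq_one_iff_even h_neg_one).1 (mul_right_cancel₀ h_lead_ne h_lead)

theorem exists_polynomial_eval_eq_det_add_smul {R M : Type*} [CommRing R] [Nontrivial R]
    [AddCommGroup M] [Module R M] [Module.Free R M] [Module.Finite R M] (f g : M →ₗ[R] M) :
    ∃ P : R[X], P.natDegree ≤ finrank R M ∧ ∀ t : R, P.eval t = LinearMap.det (f + t • g) := by
  classical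
  let b := Module.finBasis R M
  let F := LinearMap.toMatrix b b f
  let G := LinearMap.toMatrix b b g
  refine ⟨Matrix.det ((X : R[X]) • G.map C + F.map C), ?_, fun t => ?_⟩
  · simpa using natDegree_det_X_add_C_le G F
  · rw [← LinearMap.det_toMatrix b, ← coe_evalRingHom, RingHom.map_det]
    congr 1
    ext i j
    simp [F, G, add_comm, mul_comm t]

-- Lagrange interpolation at `n + 1` points of `I` makes integration commute with evaluation.
theorem exists_polynomial_eval_eq_integral {α 𝕜 : Type*} [RCLike 𝕜] [MeasurableSpace α]
    {μ : Measure α} {F : 𝕜 → α → 𝕜} {n : ℕ}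
    (hF : ∀ x, ∃ P : 𝕜[X], P.natDegree ≤ n ∧ ∀ t, P.eval t = F t x)
    {I : Set 𝕜} (hI : I.Infinite) (hint : ∀ t ∈ I, Integrable (F t) μ) :
    ∃ Q : 𝕜[X], ∀ t, Q.eval t = ∫ x, F t x ∂μ := by
  classical
  obtain ⟨S, hSI, hS⟩ := hI.exists_subset_card_eq (n + 1)
  have h_interpolate (t : 𝕜) (x : α) :
      F t x = ∑ i ∈ S, F i x * (Lagrange.basis S id i).eval t := by
    obtain ⟨P, hdeg, hP⟩ := hF x
    have hlt : P.degree < S.card := by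
      rw [hS]
      exact (degree_le_of_natDegree_le hdeg).trans_lt (by exact_mod_cast n.lt_succ_self)
    rw [← hP, congrArg (eval t) (Lagrange.eq_interpolate (injOn_id _) hlt),
      Lagrange.interpolate_apply, eval_finsetSum]
    simp only [eval_mul, eval_C, hP, id]
  refine ⟨∑ i ∈ S, C (∫ x, F i x ∂μ) * Lagrange.basis S id i, fun t => ?_⟩
  simp_rw [h_interpolate t]
  rw [integral_finsetSum S fun i hi => (hint i (hSI hi)).mul_const _, eval_finsetSum]
  simp only [eval_mul, eval_C, integral_mul_const]

end Polynomials

section LipschitzPerturbation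

theorem bijective_id_add_of_lipschitzWith {E : Type*} [NormedAddCommGroup E] [CompleteSpace E]
    {g : E → E} {K : ℝ≥0} (hg : LipschitzWith K g) (hK : K < 1) :
    Function.Bijective fun x => x + g x := by
  constructor
  · exact (AntilipschitzWith.id.add_lipschitzWith hg (by simpa using hK)).injective
  · intro y
    have hcontr : ContractingWith K fun x => y - g x :=
      ⟨hK, by simpa using (LipschitzWith.const y).sub hg⟩
    obtain ⟨x, hx⟩ : ∃ x, y - g x = x := ⟨_, hcontr.fixedPoint_isFixedPt⟩
    exact ⟨x, (sub_eq_iff_eq_add.1 hx).symm⟩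

theorem image_ball_diff_zero_of_norm_eq {E F : Type*} [NormedAddCommGroup E] [NormedAddCommGroup F]
    {f : E → F} (hf : Function.Surjective f) {r : ℝ} (hr : 0 < r)
    (hnorm : ∀ x, ‖f x‖ = r * ‖x‖) (ρ : ℝ) :
    f '' (ball 0 ρ \ {0}) = ball 0 (r * ρ) \ {0} := by
  rw [← image_preimage_eq (ball 0 (r * ρ) \ {0}) hf]
  congr 1
  ext x
  have h_zero : f x = 0 ↔ x = 0 := by
    rw [← norm_eq_zero, hnorm, mul_eq_zero_iff_left hr.ne', norm_eq_zero]
  simp [h_zero, hnorm, hr]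

variable {E : Type*} [NormedAddCommGroup E] [NormedSpace ℝ E] [FiniteDimensional ℝ E]

theorem det_one_add_pos {A : E →L[ℝ] E} (hA : ‖A‖ < 1) : 0 < (1 + A).det := by
  have hcont : Continuous fun T : E →L[ℝ] E => (1 + T).det :=
    ContinuousLinearMap.continuous_det.comp (continuous_const.add continuous_id)
  have h_ne : ∀ T ∈ ball (0 : E →L[ℝ] E) 1, (1 + T).det ≠ 0 := by
    intro T hT
    have hunit : IsUnit (1 + T) := by
      simpa using isUnit_one_sub_of_norm_lt_one (x := -T) (by simpa using hT)
    exact (LinearMap.isUnit_det _ (hunit.map ContinuousLinearMap.toLinearMapRingHom)).ne_zero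
  by_contra! h_nonpos
  have h_zero : (1 + (0 : E →L[ℝ] E)).det = 1 := by simp [ContinuousLinearMap.det]
  obtain ⟨T, hT, hdet⟩ := (convex_ball (0 : E →L[ℝ] E) 1).isPreconnected.intermediate_value
    (mem_ball_zero_iff.2 hA) (mem_ball_self one_pos) hcont.continuousOn
    ⟨h_nonpos, h_zero.symm ▸ zero_le_one⟩
  exact h_ne T hT hdet

variable [Nontrivial E] [MeasurableSpace E] [BorelSpace E] (μ : Measure E) [μ.IsAddHaarMeasure]

theorem integrableOn_and_integral_det_one_add_fderiv {g : E → E} {g' : E → E →L[ℝ] E} {K : ℝ≥0}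
    (hg : LipschitzWith K g) (hK : K < 1) (hg' : ∀ x ≠ 0, HasFDerivAt g (g' x) x)
    {r : ℝ} (hr : 0 < r) (hnorm : ∀ x, ‖x + g x‖ = r * ‖x‖) :
    IntegrableOn (fun x => (1 + g' x).det) (ball 0 1 \ {0}) μ ∧
      ∫ x in ball 0 1 \ {0}, (1 + g' x).det ∂μ = r ^ finrank ℝ E * μ.real (ball 0 1) := by
  have hbij := bijective_id_add_of_lipschitzWith hg hK
  have himage : (fun x => x + g x) '' (ball 0 1 \ {0}) = ball 0 r \ {0} := by
    simpa using image_ball_diff_zero_of_norm_eq hbij.surjective hr hnorm 1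
  have hmeas : MeasurableSet (ball (0 : E) 1 \ {0}) :=
    measurableSet_ball.diff (measurableSet_singleton 0)
  have hderiv : ∀ x ∈ ball (0 : E) 1 \ {0},
      HasFDerivWithinAt (fun x => x + g x) (1 + g' x) (ball 0 1 \ {0}) x := fun x hx =>
    ((hasFDerivAt_id x).add (hg' x hx.2)).hasFDerivWithinAt
  have h_abs : EqOn (fun x => |(1 + g' x).det| • (1 : ℝ)) (fun x => (1 + g' x).det)
      (ball 0 1 \ {0}) := by
    intro x hx
    have hlt : ‖g' x‖ < 1 := ((hg' x hx.2).le_of_lipschitz hg).trans_lt hK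
    simp [abs_of_pos (det_one_add_pos hlt)]
  constructor
  · rw [← integrableOn_congr_fun h_abs hmeas,
      ← integrableOn_image_iff_integrableOn_abs_det_fderiv_smul μ hmeas hderiv hbij.injective.injOn
        fun _ => (1 : ℝ), himage]
    exact integrableOn_const ((measure_mono sdiff_subset).trans_lt measure_ball_lt_top).ne
  · calc
      ∫ x in ball 0 1 \ {0}, (1 + g' x).det ∂μ
        = ∫ _ in (fun x => x + g x) '' (ball 0 1 \ {0}), (1 : ℝ) ∂μ := by
          rw [integral_image_eq_integral_abs_det_fderiv_smul μ hmeas hderiv hbij.injective.injOn,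
            setIntegral_congr_fun hmeas h_abs]
      _ = μ.real (ball 0 r \ {0}) := by rw [himage, setIntegral_const, smul_eq_mul, mul_one]
      _ = r ^ finrank ℝ E * μ.real (ball 0 1) := by
          rw [measureReal_def, measure_sdiff_null (measure_singleton 0),
            Measure.addHaar_ball_of_pos μ 0 hr, ENNReal.toReal_mul,
            ENNReal.toReal_ofReal (by positivity), measureReal_def]

end LipschitzPerturbation

section RadialExtension

variable {E F : Type*} [NormedAddCommGroup E] [NormedSpace ℝ E]
  [NormedAddCommGroup F] [NormedSpace ℝ F]

theorem norm_mul_norm_normalize_sub_normalize_le (x y : E) :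
    ‖y‖ * ‖NormedSpace.normalize x - NormedSpace.normalize y‖ ≤ 2 * ‖x - y‖ := by
  have h_normalize_le : ‖NormedSpace.normalize x‖ ≤ 1 := by
    rw [NormedSpace.normalize, norm_smul, norm_inv, norm_norm]
    exact inv_mul_le_one
  calc
    ‖y‖ * ‖NormedSpace.normalize x - NormedSpace.normalize y‖
      = ‖(‖y‖ - ‖x‖) • NormedSpace.normalize x + (x - y)‖ := by
        rw [← norm_norm y, ← norm_smul, norm_norm, smul_sub, sub_smul,
          NormedSpace.norm_smul_normalize, NormedSpace.norm_smul_normalize]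
        congr 1
        abel
    _ ≤ |‖y‖ - ‖x‖| * ‖NormedSpace.normalize x‖ + ‖x - y‖ := by
        rw [← Real.norm_eq_abs, ← norm_smul]
        exact norm_add_le _ _
    _ ≤ ‖x - y‖ * 1 + ‖x - y‖ := by
        gcongr
        rw [norm_sub_rev x y]
        exact abs_norm_sub_norm_le y x
    _ = 2 * ‖x - y‖ := by ring

/-- The positively homogeneous extension of degree one, to the whole space, of a map `n` on the unit
sphere. It only depends on the values of `n` on the sphere: at `0`, where `normalize 0 = 0`, the
factor `‖x‖` kills the value `n 0`. -/
noncomputable def radialExtension (n : E → F) (x : E) : F := ‖x‖ • n (NormedSpace.normalize x)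

variable {n : E → F}

theorem radialExtension_zero : radialExtension n 0 = 0 := by simp [radialExtension]

theorem normalize_mem_sphere {x : E} (hx : x ≠ 0) : NormedSpace.normalize x ∈ sphere (0 : E) 1 :=
  mem_sphere_zero_iff_norm.2 (NormedSpace.norm_normalize_eq_one_iff.2 hx)

theorem norm_radialExtension_le {M : ℝ} (hn : ∀ x ∈ sphere (0 : E) 1, ‖n x‖ ≤ M) (x : E) :
    ‖radialExtension n x‖ ≤ M * ‖x‖ := by
  rcases eq_or_ne x 0 with rfl | hx
  · simp [radialExtension_zero]
  · rw [radialExtension, norm_smul, norm_norm, mul_comm]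
    gcongr
    exact hn _ (normalize_mem_sphere hx)

theorem norm_radialExtension_of_norm_eq_one (hn : ∀ x ∈ sphere (0 : E) 1, ‖n x‖ = 1) (x : E) :
    ‖radialExtension n x‖ = ‖x‖ := by
  rcases eq_or_ne x 0 with rfl | hx
  · simp [radialExtension_zero]
  · rw [radialExtension, norm_smul, norm_norm, hn _ (normalize_mem_sphere hx), mul_one]

theorem lipschitzWith_radialExtension {L M : ℝ≥0} (hLip : LipschitzOnWith L n (sphere 0 1))
    (hn : ∀ x ∈ sphere (0 : E) 1, ‖n x‖ ≤ M) : LipschitzWith (M + 2 * L) (radialExtension n) := by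
  have h_at_zero (x : E) : ‖radialExtension n x‖ ≤ (M + 2 * L : ℝ≥0) * ‖x‖ :=
    (norm_radialExtension_le hn x).trans (by gcongr; simp)
  refine LipschitzWith.of_dist_le_mul fun x y => ?_
  rw [dist_eq_norm, dist_eq_norm]
  rcases eq_or_ne x 0 with rfl | hx
  · simpa [radialExtension_zero] using h_at_zero y
  rcases eq_or_ne y 0 with rfl | hy
  · simpa [radialExtension_zero] using h_at_zero x
  set x₁ := NormedSpace.normalize x
  set y₁ := NormedSpace.normalize y
  have h_angular : ‖y‖ * ‖n x₁ - n y₁‖ ≤ L * (2 * ‖x - y‖) := calc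
    ‖y‖ * ‖n x₁ - n y₁‖ ≤ ‖y‖ * (L * ‖x₁ - y₁‖) := by
      gcongr
      exact hLip.norm_sub_le (normalize_mem_sphere hx) (normalize_mem_sphere hy)
    _ = L * (‖y‖ * ‖x₁ - y₁‖) := by ring
    _ ≤ L * (2 * ‖x - y‖) :=
      mul_le_mul_of_nonneg_left (norm_mul_norm_normalize_sub_normalize_le x y) L.2
  calc
    ‖radialExtension n x - radialExtension n y‖
      = ‖(‖x‖ - ‖y‖) • n x₁ + ‖y‖ • (n x₁ - n y₁)‖ := by
        rw [radialExtension, radialExtension, sub_smul, smul_sub]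
        congr 1
        abel
    _ ≤ |‖x‖ - ‖y‖| * ‖n x₁‖ + ‖y‖ * ‖n x₁ - n y₁‖ := by
        rw [← Real.norm_eq_abs, ← norm_smul, ← norm_norm y, ← norm_smul, norm_norm]
        exact norm_add_le _ _
    _ ≤ ‖x - y‖ * M + L * (2 * ‖x - y‖) := by
        gcongr
        · exact abs_norm_sub_norm_le x y
        · exact hn _ (normalize_mem_sphere hx)
    _ = (M + 2 * L : ℝ≥0) * ‖x - y‖ := by
        push_cast
        ring

end RadialExtension

section SphereFields

-- The condition on `g x` is convex and locally solved by constants: use a partition of unity.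
theorem exists_contDiff_inner_pos {E F : Type*} [NormedAddCommGroup E] [NormedSpace ℝ E]
    [FiniteDimensional ℝ E] [NormedAddCommGroup F] [InnerProductSpace ℝ F]
    {u : E → F} {s : Set E} (hs : IsClosed s) (hu : ContinuousOn u s) (h_ne : ∀ x ∈ s, u x ≠ 0)
    (k : ℕ∞) : ∃ g : E → F, ContDiff ℝ k g ∧ ∀ x ∈ s, 0 < ⟪u x, g x⟫ := by
  have h_convex (x : E) : Convex ℝ {c : F | x ∈ s → 0 < ⟪u x, c⟫} := by
    by_cases hx : x ∈ s
    · simp only [hx, true_imp_iff]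
      exact convex_halfSpace_gt (innerₛₗ ℝ (u x)).isLinear 0
    · simp [hx, convex_univ]
  have h_local (x : E) : ∃ c : F, ∀ᶠ y in 𝓝 x, c ∈ {c : F | y ∈ s → 0 < ⟪u y, c⟫} := by
    by_cases hx : x ∈ s
    · refine ⟨u x, eventually_nhdsWithin_iff.1 ?_⟩
      exact ((hu x hx).inner continuousWithinAt_const).eventually_const_lt
        (real_inner_self_pos.2 (h_ne x hx))
    · exact ⟨0, (hs.isOpen_compl.eventually_mem hx).mono fun y hy hys => absurd hys hy⟩
  obtain ⟨g, hg⟩ := exists_contMDiffMap_forall_mem_convex_of_local_const (n := k)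
    (modelWithCornersSelf ℝ E) h_convex h_local
  exact ⟨g, g.contMDiff.contDiff, hg⟩

variable {E : Type*} [NormedAddCommGroup E] [InnerProductSpace ℝ E]

theorem differentiableAt_radialExtension {F : Type*} [NormedAddCommGroup F] [NormedSpace ℝ F]
    {n : E → F} (hn : ∀ x ∈ sphere (0 : E) 1, DifferentiableAt ℝ n x) {x : E} (hx : x ≠ 0) :
    DifferentiableAt ℝ (radialExtension n) x := by
  have h_norm : DifferentiableAt ℝ (fun y : E => ‖y‖) x := differentiableAt_id.norm ℝ hx
  have h_normalize : DifferentiableAt ℝ NormedSpace.normalize x :=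
    (h_norm.inv (norm_ne_zero_iff.2 hx)).smul differentiableAt_id
  exact h_norm.smul ((hn _ (normalize_mem_sphere hx)).comp x h_normalize)

theorem inner_radialExtension_eq_zero {n : E → E} (hn : ∀ x ∈ sphere (0 : E) 1, ⟪x, n x⟫ = 0)
    (x : E) : ⟪x, radialExtension n x⟫ = 0 := by
  rcases eq_or_ne x 0 with rfl | hx
  · exact inner_zero_left _
  · have h_normalize : ⟪‖x‖ • NormedSpace.normalize x, n (NormedSpace.normalize x)⟫ = 0 := by
      rw [real_inner_smul_left, hn _ (normalize_mem_sphere hx), mul_zero]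
    rw [NormedSpace.norm_smul_normalize] at h_normalize
    rw [radialExtension, real_inner_smul_right, h_normalize, mul_zero]

theorem norm_add_smul_of_inner_eq_zero {x y : E} (hnorm : ‖y‖ = ‖x‖) (horth : ⟪x, y⟫ = 0) (t : ℝ) :
    ‖x + t • y‖ = √(1 + t ^ 2) * ‖x‖ := by
  rw [← sq_eq_sq₀ (norm_nonneg _) (by positivity), mul_pow, Real.sq_sqrt (by positivity),
    norm_add_sq_real, real_inner_smul_right, horth, norm_smul, hnorm, Real.norm_eq_abs, mul_pow,
    sq_abs]
  ring

/-- The orthogonal projection of `v x` to the hyperplane `xᗮ`, for `x` on the unit sphere; written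
out so that it depends visibly smoothly on `x`. -/
def tangentialPart (v : E → E) (x : E) : E := v x - ⟪x, v x⟫ • x

theorem inner_tangentialPart {v : E → E} {x : E} (hx : x ∈ sphere (0 : E) 1) :
    ⟪x, tangentialPart v x⟫ = 0 := by
  have hx_norm : ‖x‖ = 1 := mem_sphere_zero_iff_norm.1 hx
  simp [tangentialPart, inner_sub_right, real_inner_smul_right, hx_norm]

theorem eq_inner_smul_of_tangentialPart_eq_zero {v : E → E} {x : E} (h : tangentialPart v x = 0) :
    v x = ⟪x, v x⟫ • x :=
  sub_eq_zero.1 h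

variable [FiniteDimensional ℝ E]

theorem even_finrank_of_lipschitzWith_orthogonal {w : E → E} {w' : E → E →L[ℝ] E} {K : ℝ≥0}
    (hw : LipschitzWith K w) (hw' : ∀ x ≠ 0, HasFDerivAt w (w' x) x)
    (hnorm : ∀ x, ‖w x‖ = ‖x‖) (horth : ∀ x, ⟪x, w x⟫ = 0) : Even (finrank ℝ E) := by
  rcases subsingleton_or_nontrivial E with hE | hE
  · simp [finrank_zero_of_subsingleton]
  borelize E
  let μ : Measure E := Measure.addHaar
  set I : Set ℝ := ball 0 (K + 1 : ℝ)⁻¹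
  have hI : I.Infinite := infinite_of_mem_nhds 0 (ball_mem_nhds 0 (by positivity))
  have h_volume : ∀ t ∈ I, IntegrableOn (fun x => (1 + t • w' x).det) (ball 0 1 \ {0}) μ ∧
      ∫ x in ball 0 1 \ {0}, (1 + t • w' x).det ∂μ =
        √(1 + t ^ 2) ^ finrank ℝ E * μ.real (ball 0 1) := by
    intro t ht
    have h_small : ‖t‖₊ * K < 1 := by
      have h_lt : ‖t‖ * (K + 1) < 1 := by
        rwa [← lt_div_iff₀ (by positivity), one_div, ← mem_ball_zero_iff]
      rw [← NNReal.coe_lt_coe]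
      push_cast
      linarith [norm_nonneg t]
    exact integrableOn_and_integral_det_one_add_fderiv μ ((lipschitzWith_smul t).comp hw) h_small
      (fun x hx => (hw' x hx).const_smul t) (by positivity)
      fun x => norm_add_smul_of_inner_eq_zero (hnorm x) (horth x) t
  obtain ⟨Q, hQ⟩ := exists_polynomial_eval_eq_integral
    (F := fun (t : ℝ) x => (1 + t • w' x).det) (μ := μ.restrict (ball 0 1 \ {0}))
    (fun x => exists_polynomial_eval_eq_det_add_smul 1 (w' x).toLinearMap)
    hI fun t ht => (h_volume t ht).1
  have h_volume_ne : μ.real (ball (0 : E) 1) ^ 2 ≠ 0 := pow_ne_zero 2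
    (ENNReal.toReal_pos (measure_ball_pos μ _ one_pos).ne' measure_ball_lt_top.ne).ne'
  refine even_of_sq_eq_C_mul_X_sq_add_one_pow (P := Q) h_volume_ne
    (eq_of_infinite_eval_eq _ _ (hI.mono fun t ht => ?_))
  simp only [mem_ofPred_eq, eval_pow, eval_mul, eval_C, eval_add, eval_X, eval_one, hQ,
    (h_volume t ht).2]
  rw [mul_pow, ← pow_mul, mul_comm (finrank ℝ E), pow_mul, Real.sq_sqrt (by positivity), mul_comm,
    add_comm 1]

theorem even_finrank_of_contDiffAt_unit_tangent {n : E → E}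
    (hn : ∀ x ∈ sphere (0 : E) 1, ContDiffAt ℝ 1 n x)
    (hnorm : ∀ x ∈ sphere (0 : E) 1, ‖n x‖ = 1)
    (horth : ∀ x ∈ sphere (0 : E) 1, ⟪x, n x⟫ = 0) : Even (finrank ℝ E) := by
  obtain ⟨L, hL⟩ : ∃ L, LipschitzOnWith L n (sphere 0 1) := by
    refine LocallyLipschitzOn.exists_lipschitzOnWith_of_compact (isCompact_sphere 0 1) ?_
    intro x hx
    obtain ⟨K, U, hU, hK⟩ := (hn x hx).exists_lipschitzOnWith
    exact ⟨K, U, mem_nhdsWithin_of_mem_nhds hU, hK⟩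
  have hLip := lipschitzWith_radialExtension (M := 1) hL fun x hx => (hnorm x hx).le
  exact even_finrank_of_lipschitzWith_orthogonal hLip
    (fun x hx => (differentiableAt_radialExtension
      (fun y hy => (hn y hy).differentiableAt one_ne_zero) hx).hasFDerivAt)
    (norm_radialExtension_of_norm_eq_one hnorm) (inner_radialExtension_eq_zero horth)

theorem exists_tangentialPart_eq_zero_of_contDiff (hodd : Odd (finrank ℝ E)) {g : E → E}
    (hg : ContDiff ℝ 1 g) : ∃ x ∈ sphere (0 : E) 1, tangentialPart g x = 0 := by
  by_contra! h_ne
  have h_smooth : ContDiff ℝ 1 (tangentialPart g) :=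
    hg.sub ((contDiff_id.inner ℝ hg).smul contDiff_id)
  refine Nat.not_even_iff_odd.2 hodd (even_finrank_of_contDiffAt_unit_tangent
    (n := fun x => NormedSpace.normalize (tangentialPart g x)) (fun x hx => ?_) (fun x hx => ?_)
    fun x hx => ?_)
  · exact ((h_smooth.contDiffAt.norm ℝ (h_ne x hx)).inv (norm_ne_zero_iff.2 (h_ne x hx))).smul
      h_smooth.contDiffAt
  · exact NormedSpace.norm_normalize_eq_one_iff.2 (h_ne x hx)
  · rw [NormedSpace.normalize, real_inner_smul_right, inner_tangentialPart hx, mul_zero]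

theorem exists_mem_sphere_eq_smul_of_odd_finrank (hodd : Odd (finrank ℝ E)) {v : E → E}
    (hv : ContinuousOn v (sphere 0 1)) : ∃ x ∈ sphere (0 : E) 1, ∃ c : ℝ, v x = c • x := by
  by_contra! h_ne
  have h_tangent_ne : ∀ x ∈ sphere (0 : E) 1, tangentialPart v x ≠ 0 := fun x hx h =>
    h_ne x hx _ (eq_inner_smul_of_tangentialPart_eq_zero h)
  have h_tangent_cont : ContinuousOn (tangentialPart v) (sphere 0 1) :=
    hv.sub ((continuousOn_id.inner hv).smul continuousOn_id)
  obtain ⟨g, hg, hpos⟩ := exists_contDiff_inner_pos isClosed_sphere h_tangent_cont h_tangent_ne 1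
  obtain ⟨x, hx, hgx⟩ := exists_tangentialPart_eq_zero_of_contDiff hodd hg
  have h_inner : ⟪tangentialPart v x, g x⟫ = 0 := by
    rw [eq_inner_smul_of_tangentialPart_eq_zero hgx, real_inner_smul_right,
      real_inner_comm x (tangentialPart v x), inner_tangentialPart hx, mul_zero]
  exact (hpos x hx).ne' h_inner

end SphereFields

section OddDimension

variable {E : Type*} [AddCommGroup E] [TopologicalSpace E] [IsTopologicalAddGroup E] [T2Space E]
  [Module ℝ E] [ContinuousSMul ℝ E]

theorem exists_ne_zero_eq_smul_of_odd_finrank (hodd : Odd (finrank ℝ E)) {v : E → E}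
    (hv : ContinuousOn v {0}ᶜ) : ∃ x ≠ 0, ∃ c : ℝ, v x = c • x := by
  have : FiniteDimensional ℝ E := Module.finite_of_finrank_pos hodd.pos
  let e := toEuclidean (E := E)
  have h_maps : MapsTo e.symm (sphere 0 1) {0}ᶜ := fun y hy =>
    e.symm.map_ne_zero_iff.2 (ne_zero_of_mem_unit_sphere ⟨y, hy⟩)
  obtain ⟨y, hy, c, hc⟩ := exists_mem_sphere_eq_smul_of_odd_finrank (by simpa using hodd)
    (e.continuous.comp_continuousOn (hv.comp e.symm.continuous.continuousOn h_maps))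
  refine ⟨e.symm y, h_maps hy, c, ?_⟩
  rw [← map_smul, ← hc]
  exact (e.symm_apply_apply _).symm

-- For a first integral `H`, take `ℓ x` to be the differential of `H` at `x`.
theorem exists_steady_state_of_odd_dimension_general (hodd : Odd (finrank ℝ E)) {v : E → E}
    (hv : ContinuousOn v {0}ᶜ) (ℓ : E → Module.Dual ℝ E) (hℓ : ∀ x ≠ 0, ℓ x x ≠ 0)
    (hℓv : ∀ x ≠ 0, ℓ x (v x) = 0) : ∃ x ≠ 0, v x = 0 := by
  obtain ⟨x, hx, c, hc⟩ := exists_ne_zero_eq_smul_of_odd_finrank hodd hv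
  have hc_zero : c = 0 := by simpa [hc, hℓ x hx] using hℓv x hx
  exact ⟨x, hx, by rw [hc, hc_zero, zero_smul]⟩

end OddDimension

/-- (Corollary 1 of the paper.) For odd `p`, a continuous map
`v : ℝᵖ → ℝᵖ` homogeneous of degree 2 which admits a positive definite quadratic
first integral (`B(v(ω), ω) = 0` for a symmetric positive definite bilinear form
`B`) has a nonzero steady state `ω₀`; by homogeneity the whole line `ℝ·ω₀` then
consists of steady states, so at least one straight line of steady motions exists. -/
theorem exists_steady_state_of_odd_dimension
    (p : ℕ) (hp : Odd p)
    (v : (Fin p → ℝ) → (Fin p → ℝ))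
    (hcont : Continuous v)
    (hhom : ∀ (c : ℝ) (ω : Fin p → ℝ), v (c • ω) = c ^ 2 • v ω)
    (B : (Fin p → ℝ) →ₗ[ℝ] (Fin p → ℝ) →ₗ[ℝ] ℝ)
    (hsymm : ∀ x y, B x y = B y x)
    (hposdef : ∀ x : Fin p → ℝ, x ≠ 0 → 0 < B x x)
    (hint : ∀ ω, B (v ω) ω = 0) :
    ∃ ω₀ : Fin p → ℝ, ω₀ ≠ 0 ∧ v ω₀ = 0 ∧ ∀ μ : ℝ, v (μ • ω₀) = 0 := by
  obtain ⟨ω₀, hω₀, hvω₀⟩ := exists_steady_state_of_odd_dimension_general (by simpa using hp)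
    hcont.continuousOn B.flip (fun x hx => (hposdef x hx).ne') fun x _ => hint x
  exact ⟨ω₀, hω₀, hvω₀, fun μ => by rw [hhom, hvω₀, smul_zero]⟩
end
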